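/- arXiv:1304.1015 — 3 statements merged into one kernel-verified Lean document; each statement's English description precedes it below -/
import Mathlib

section
/- Let μ be a nonzero locally finite nonnegative Borel measure on ℝⁿ which is doubling, with constant δ_μ, with respect to the family 𝔎 of all homothetic copies of a fixed rectangle R₀. Then the maximal operator M_{𝔎,μ} is of weak type (1,1) with respect to μ and bounded on L^p(μ) for every 1 < p ≤ ∞, with operator norms depending only on δ_μ, p and n; that is, there exists C = C(δ_μ, n) such that μ({x : M_{𝔎,μ}f(x) > λ}) ≤ (C/λ)‖f‖_{L¹(μ)} for all f ∈ L¹(μ) and λ > 0, and for each p > 1 there is C_p = C(δ_μ, n, p) with ‖M_{𝔎,μ}f‖_{L^p(μ)} ≤ C_p‖f‖_{L^p(μ)}. -/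
open MeasureTheory Set Filter
open scoped ENNReal Topology Pointwise

noncomputable section

/-- The maximal operator `M_{𝔅,μ}` associated to a measure `μ` and a collection `𝔅`
of subsets of `ℝⁿ`, applied to `f` at the point `x` (valued in `ℝ≥0∞`; it equals `0`
outside the union of `𝔅`). -/
noncomputable def maxOp {n : ℕ} (μ : Measure (EuclideanSpace ℝ (Fin n)))
    (𝔅 : Set (Set (EuclideanSpace ℝ (Fin n))))
    (f : EuclideanSpace ℝ (Fin n) → ℝ) (x : EuclideanSpace ℝ (Fin n)) : ℝ≥0∞ :=
  ⨆ (B : Set (EuclideanSpace ℝ (Fin n))) (_ : B ∈ 𝔅) (_ : x ∈ B) (_ : 0 < μ B),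
    (∫⁻ y in B, ENNReal.ofReal |f y| ∂μ) / μ B

/-- A collection of sets is homothecy invariant if it is closed under translations and
positive dilations. -/
def HomothecyInvariant {n : ℕ} (𝔅 : Set (Set (EuclideanSpace ℝ (Fin n)))) : Prop :=
  ∀ B ∈ 𝔅, (∀ y : EuclideanSpace ℝ (Fin n), y +ᵥ B ∈ 𝔅) ∧ (∀ s : ℝ, 0 < s → s • B ∈ 𝔅)

/-- `μ` is doubling with respect to the collection `𝔅`, with constant `Δ`: whenever
`B ∈ 𝔅` and a translate of the dilate `2·B` contains `B`, its measure is at most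
`Δ·μ(B)`. -/
def DoublingWrt {n : ℕ} (μ : Measure (EuclideanSpace ℝ (Fin n)))
    (𝔅 : Set (Set (EuclideanSpace ℝ (Fin n)))) (Δ : ℝ) : Prop :=
  ∀ B ∈ 𝔅, ∀ σ : EuclideanSpace ℝ (Fin n),
    B ⊆ σ +ᵥ (2 : ℝ) • B → μ (σ +ᵥ (2 : ℝ) • B) ≤ ENNReal.ofReal Δ * μ B

/-- A member of a basis of convex sets: nonempty, bounded, open and convex. -/
def IsConvexBasisSet {n : ℕ} (B : Set (EuclideanSpace ℝ (Fin n))) : Prop :=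
  B.Nonempty ∧ Bornology.IsBounded B ∧ IsOpen B ∧ Convex ℝ B

/-- An open axis-parallel rectangle in `ℝⁿ`. -/
def IsAxisRect {n : ℕ} (R : Set (EuclideanSpace ℝ (Fin n))) : Prop :=
  ∃ a b : Fin n → ℝ, (∀ i, a i < b i) ∧ R = {x | ∀ i, x i ∈ Set.Ioo (a i) (b i)}

/-- An open rectangle (possibly rotated rectangular parallelepiped) in `ℝⁿ`:
the image of an open axis-parallel rectangle under a rigid motion. -/
def IsRect {n : ℕ} (R : Set (EuclideanSpace ℝ (Fin n))) : Prop :=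
  ∃ (f : EuclideanSpace ℝ (Fin n) ≃ᵢ EuclideanSpace ℝ (Fin n))
    (S : Set (EuclideanSpace ℝ (Fin n))), IsAxisRect S ∧ R = f '' S

/-- An open axis-parallel cube in `ℝⁿ`. -/
def IsAxisCube {n : ℕ} (C : Set (EuclideanSpace ℝ (Fin n))) : Prop :=
  ∃ (a : Fin n → ℝ) (s : ℝ), 0 < s ∧ C = {x | ∀ i, x i ∈ Set.Ioo (a i) (a i + s)}

/-- `M_{𝔅,μ}` is bounded on `L^p(ν)`. -/
def BoundedOnLp {n : ℕ} (μ ν : Measure (EuclideanSpace ℝ (Fin n)))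
    (𝔅 : Set (Set (EuclideanSpace ℝ (Fin n)))) (p : ℝ) : Prop :=
  ∃ C : ℝ≥0∞, C ≠ ⊤ ∧ ∀ f : EuclideanSpace ℝ (Fin n) → ℝ, Measurable f →
    ∫⁻ x, maxOp μ 𝔅 f x ^ p ∂ν ≤ C * ∫⁻ x, ENNReal.ofReal |f x| ^ p ∂ν

/-- The Tauberian condition for `M_{𝔅,μ}` at level `γ`, with constant `c`, with respect
to the measure `ν`. -/
def TauberianCond {n : ℕ} (μ ν : Measure (EuclideanSpace ℝ (Fin n)))
    (𝔅 : Set (Set (EuclideanSpace ℝ (Fin n)))) (γ c : ℝ) : Prop :=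
  ∀ E : Set (EuclideanSpace ℝ (Fin n)), MeasurableSet E →
    ν {x | ENNReal.ofReal γ < maxOp μ 𝔅 (E.indicator 1) x} ≤ ENNReal.ofReal c * ν E

/-- The standard open dyadic box of scale `2^k` and position `m` in `ℝⁿ`. -/
def stdBox (n : ℕ) (k : ℤ) (m : Fin n → ℤ) : Set (Fin n → ℝ) :=
  {x | ∀ i, (m i : ℝ) * 2 ^ k < x i ∧ x i < ((m i : ℝ) + 1) * 2 ^ k}

/-- A parametrization of a rectangular grid: a rigid motion composed with a positive
diagonal scaling. The image of the standard unit box under such a map is a rectangle. -/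
def IsRectParam {n : ℕ} (T : (Fin n → ℝ) → EuclideanSpace ℝ (Fin n)) : Prop :=
  ∃ (f : EuclideanSpace ℝ (Fin n) ≃ᵢ EuclideanSpace ℝ (Fin n)) (l : Fin n → ℝ),
    (∀ i, 0 < l i) ∧
    ∀ x, T x = f ((WithLp.equiv 2 (Fin n → ℝ)).symm (fun i => l i * x i))

/-- The dyadic mesh generated by a rectangle parametrized by `T`. -/
def dyadicMesh {n : ℕ} (T : (Fin n → ℝ) → EuclideanSpace ℝ (Fin n)) :
    Set (Set (EuclideanSpace ℝ (Fin n))) :=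
  {S | ∃ (k : ℤ) (m : Fin n → ℤ), S = T '' stdBox n k m}

/-- `S` is a dyadic descendant of the rectangle `R`, `s` generations inside `R`. -/
def DyadicDescendant {n : ℕ} (R S : Set (EuclideanSpace ℝ (Fin n))) (s : ℕ) : Prop :=
  ∃ T : (Fin n → ℝ) → EuclideanSpace ℝ (Fin n), IsRectParam T ∧
    T '' stdBox n 0 0 = R ∧
    ∃ m : Fin n → ℤ, (∀ i, 0 ≤ m i ∧ m i < 2 ^ s) ∧ S = T '' stdBox n (-(s : ℤ)) m

/-- The family of all homothetic copies (translates and positive dilates) of `R₀`. -/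
def homCopies {n : ℕ} (R₀ : Set (EuclideanSpace ℝ (Fin n))) :
    Set (Set (EuclideanSpace ℝ (Fin n))) :=
  {S | ∃ (y : EuclideanSpace ℝ (Fin n)) (s : ℝ), 0 < s ∧ S = y +ᵥ s • R₀}

/-- Iterated halo sets `H_β^k(E)`: `H_β^0(E) = E` and
`H_β^{k+1}(E) = {x : M_{𝔊,μ}(1_{H_β^k(E)})(x) ≥ β}`. -/
def Hiter {n : ℕ} (μ : Measure (EuclideanSpace ℝ (Fin n)))
    (𝔊 : Set (Set (EuclideanSpace ℝ (Fin n)))) (β : ℝ)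
    (E : Set (EuclideanSpace ℝ (Fin n))) : ℕ → Set (EuclideanSpace ℝ (Fin n))
  | 0 => E
  | k + 1 => {x | ENNReal.ofReal β ≤ maxOp μ 𝔊 ((Hiter μ 𝔊 β E k).indicator 1) x}

/-- The Muckenhoupt `A_{p,𝔅}` condition for a weight `w` (with respect to Lebesgue
measure); here `1 - p/(p-1) = 1 - p'`. -/
def MuckenhouptAp {n : ℕ} (𝔅 : Set (Set (EuclideanSpace ℝ (Fin n))))
    (w : EuclideanSpace ℝ (Fin n) → ℝ) (p : ℝ) : Prop :=
  ∃ C : ℝ≥0∞, C ≠ ⊤ ∧ ∀ B ∈ 𝔅,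
    ((∫⁻ x in B, ENNReal.ofReal (w x) ∂volume) / volume B) *
      (((∫⁻ x in B, ENNReal.ofReal (w x) ^ (1 - p / (p - 1)) ∂volume) / volume B) ^ (p - 1))
      ≤ C

/-- `𝔅` is a Muckenhoupt basis: for every `1 < p < ∞` and every weight `w ∈ A_{p,𝔅}`,
the maximal operator `M_𝔅` is bounded on `L^p(w)`. -/
def MuckenhouptBasis {n : ℕ} (𝔅 : Set (Set (EuclideanSpace ℝ (Fin n)))) : Prop :=
  ∀ p : ℝ, 1 < p → ∀ w : EuclideanSpace ℝ (Fin n) → ℝ, (∀ x, 0 ≤ w x) →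
    LocallyIntegrable w volume → MuckenhouptAp 𝔅 w p →
    BoundedOnLp volume (volume.withDensity fun x => ENNReal.ofReal (w x)) 𝔅 p

end

/-!
Let `D` be an open convex set with centre of symmetry `0`. If two homothetic copies `z₁ + s₁ D`
and `z₂ + s₂ D` meet and `s₁ ≤ 2 s₂`, then the first is contained in `z₂ + 5 s₂ D`, so Vitali's
selection extracts from every finite family of copies a disjoint subfamily whose fivefold
enlargements cover its union. Three doublings bound the measure of an enlargement, which gives the
weak type `(1,1)` inequality with constant `δ ^ 3`.

For the `L^p` bound, `f` differs from its restriction to `{2 |f| > t}` by at most `t / 2`, so the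
weak type inequality for that restriction controls `{M f > t}` by the integral of `|f|` over
`{2 |f| > t}`. Integrating against `p t ^ (p - 1) dt` yields the bound.
-/

section Homothets

variable {E : Type*} [AddCommGroup E] [Module ℝ E] {D : Set E}

lemma vadd_smul_subset_vadd_smul_of_inter_nonempty (hD : AbsConvex ℝ D) {z₁ z₂ : E} {s₁ s₂ : ℝ}
    (hs₁ : 0 ≤ s₁) (hs₂ : 0 ≤ s₂) (hmeet : ((z₁ +ᵥ s₁ • D) ∩ (z₂ +ᵥ s₂ • D)).Nonempty) :
    z₁ +ᵥ s₁ • D ⊆ z₂ +ᵥ (s₂ + (s₁ + s₁)) • D := by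
  obtain ⟨_, ⟨_, ⟨d₁, hd₁, rfl⟩, rfl⟩, _, ⟨d₂, hd₂, rfl⟩, heq⟩ := hmeet
  rintro _ ⟨_, ⟨d, hd, rfl⟩, rfl⟩
  rw [hD.2.add_smul hs₂ (add_nonneg hs₁ hs₁), hD.2.add_smul hs₁ hs₁]
  have hneg : s₁ • -d₁ ∈ s₁ • D := smul_mem_smul_set (hD.1.neg_mem_iff.2 hd₁)
  refine ⟨s₂ • d₂ + (s₁ • -d₁ + s₁ • d), add_mem_add (smul_mem_smul_set hd₂)
    (add_mem_add hneg (smul_mem_smul_set hd)), ?_⟩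
  simp only [vadd_eq_add, smul_neg] at heq ⊢
  rw [← add_assoc, heq]
  abel

lemma exists_pairwiseDisjoint_biUnion_vadd_smul_subset (hD : AbsConvex ℝ D) (hne : D.Nonempty)
    {t : Set (E × ℝ)} (ht : ∀ q ∈ t, 0 ≤ q.2) {R : ℝ} (hR : ∀ q ∈ t, q.2 ≤ R) :
    ∃ u ⊆ t, u.PairwiseDisjoint (fun q ↦ q.1 +ᵥ q.2 • D) ∧
      ⋃ q ∈ t, (q.1 +ᵥ q.2 • D) ⊆ ⋃ q ∈ u, (q.1 +ᵥ (5 * q.2) • D) := by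
  obtain ⟨u, hut, hdisj, hmeet⟩ := Vitali.exists_disjoint_subfamily_covering_enlargement
    (fun q : E × ℝ ↦ q.1 +ᵥ q.2 • D) t Prod.snd 2 one_lt_two ht R hR
    fun _ _ ↦ hne.smul_set.vadd_set
  refine ⟨u, hut, hdisj, iUnion₂_subset fun q hq ↦ ?_⟩
  obtain ⟨r, hr, hqr, hle⟩ := hmeet q hq
  have hq₀ := ht q hq
  have hr₀ := ht r (hut hr)
  have henlarge : (r.2 + (q.2 + q.2)) • D ⊆ (5 * r.2) • D :=
    hD.1.smul_mono <| by
      rw [Real.norm_of_nonneg (by positivity), Real.norm_of_nonneg (by positivity)]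
      linarith
  exact (vadd_smul_subset_vadd_smul_of_inter_nonempty hD hq₀ hr₀ hqr).trans <|
    (vadd_set_mono henlarge).trans (subset_iUnion₂_of_subset r hr Subset.rfl)

end Homothets

section OpenSymmConvex

variable {E F : Type*} [NormedAddCommGroup E] [NormedSpace ℝ E] [NormedAddCommGroup F]
  [NormedSpace ℝ F]

/-- Open convex sets with a centre of symmetry, the shapes for which the maximal theorem is proved.
They are encoded as the translates `c + D` of open absolutely convex sets `D`; neither boundedness
nor nonemptiness is included. -/
def IsOpenSymmConvex (R : Set E) : Prop :=
  ∃ (c : E) (D : Set E), IsOpen D ∧ AbsConvex ℝ D ∧ R = c +ᵥ D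

lemma IsOpenSymmConvex.image_isometryEquiv {R : Set E} (hR : IsOpenSymmConvex R) (f : E ≃ᵢ F) :
    IsOpenSymmConvex (f '' R) := by
  obtain ⟨c, D, hopen, hD, rfl⟩ := hR
  let L := f.toRealAffineIsometryEquiv.linearIsometryEquiv
  have hf (x : E) : f (c + x) = f c + L x := by
    have := f.toRealAffineIsometryEquiv.map_vadd c x
    simpa [L, add_comm] using this
  refine ⟨f c, L '' D, L.toHomeomorph.isOpenMap D hopen, ⟨?_, hD.2.linear_image L.toLinearMap⟩, ?_⟩
  · rintro a ha _ ⟨_, ⟨d, hd, rfl⟩, rfl⟩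
    exact ⟨a • d, hD.1 a ha (smul_mem_smul_set hd), map_smul L a d⟩
  · simp only [← image_vadd, image_image, vadd_eq_add, hf]

lemma isOpen_setOf_abs_lt {ι : Type*} [Finite ι] (r : ι → ℝ) :
    IsOpen {x : EuclideanSpace ℝ ι | ∀ i, |x i| < r i} := by
  simp only [ofPred_forall]
  exact isOpen_iInter_of_finite fun i ↦ isOpen_lt (by fun_prop) continuous_const

lemma absConvex_setOf_abs_lt {ι : Type*} (r : ι → ℝ) :
    AbsConvex ℝ {x : EuclideanSpace ℝ ι | ∀ i, |x i| < r i} := by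
  refine ⟨balanced_iff_smul_mem.2 fun a ha x hx i ↦ ?_, fun x hx y hy a b ha hb hab i ↦ ?_⟩
  · calc |a * x i| = ‖a‖ * |x i| := abs_mul a (x i)
      _ ≤ |x i| := mul_le_of_le_one_left (abs_nonneg _) ha
      _ < r i := hx i
  · have := convex_ball (0 : ℝ) (r i) (mem_ball_zero_iff.2 (hx i)) (mem_ball_zero_iff.2 (hy i))
      ha hb hab
    exact mem_ball_zero_iff.1 this

end OpenSymmConvex

section LayerCake

variable {α : Type*} [MeasurableSpace α] {μ : Measure α} {p : ℝ}

lemma lintegral_rpow_le_lintegral_meas_ofReal_lt_mul {F : α → ℝ≥0∞} (hF : AEMeasurable F μ)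
    (hp : 0 < p) :
    ∫⁻ x, F x ^ p ∂μ ≤
      ENNReal.ofReal p *
        ∫⁻ t in Ioi 0, μ {x | ENNReal.ofReal t < F x} * ENNReal.ofReal (t ^ (p - 1)) := by
  have htrunc (N : ℕ) (x : α) : min (F x) N ≠ ⊤ := by simp
  have hbound (N : ℕ) : ∫⁻ x, min (F x) N ^ p ∂μ ≤ ENNReal.ofReal p *
      ∫⁻ t in Ioi 0, μ {x | ENNReal.ofReal t < F x} * ENNReal.ofReal (t ^ (p - 1)) := by
    calc ∫⁻ x, min (F x) N ^ p ∂μ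
        = ∫⁻ x, ENNReal.ofReal ((min (F x) N).toReal ^ p) ∂μ := by
          refine lintegral_congr fun x ↦ ?_
          rw [← ENNReal.ofReal_rpow_of_nonneg ENNReal.toReal_nonneg hp.le,
            ENNReal.ofReal_toReal (htrunc N x)]
      _ = ENNReal.ofReal p *
            ∫⁻ t in Ioi 0, μ {x | t < (min (F x) N).toReal} * ENNReal.ofReal (t ^ (p - 1)) :=
          lintegral_rpow_eq_lintegral_meas_lt_mul μ (ae_of_all _ fun _ ↦ ENNReal.toReal_nonneg)
            (hF.min aemeasurable_const).ennreal_toReal hp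
      _ ≤ _ := by
          gcongr 1
          refine setLIntegral_mono' measurableSet_Ioi fun t ht ↦ ?_
          gcongr with x
          intro hx
          exact ((ENNReal.ofReal_lt_iff_lt_toReal (le_of_lt ht) (htrunc N x)).2 hx).trans_le
            (min_le_left _ _)
  have htends (x : α) : Tendsto (fun N : ℕ ↦ min (F x) N ^ p) atTop (𝓝 (F x ^ p)) := by
    have : Tendsto (fun N : ℕ ↦ min (F x) N) atTop (𝓝 (min (F x) ⊤)) :=
      tendsto_const_nhds.min ENNReal.tendsto_nat_nhds_top
    rw [min_eq_left le_top] at this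
    exact (ENNReal.continuous_rpow_const.tendsto _).comp this
  have hmono (x : α) : Monotone fun N : ℕ ↦ min (F x) N ^ p := fun _ _ _ ↦ by
    dsimp only
    gcongr
  exact le_of_tendsto' (lintegral_tendsto_of_tendsto_of_monotone
    (fun N ↦ (hF.min aemeasurable_const).pow_const p) (ae_of_all _ hmono) (ae_of_all _ htends))
    hbound

lemma lintegral_setLIntegral_lt_mul_rpow_le {g : α → ℝ} (hg : AEMeasurable g μ) (hg₀ : 0 ≤ g)
    (hp : 1 < p) :
    ∫⁻ t in Ioi 0,
        (∫⁻ x in {x | t < g x}, ENNReal.ofReal (g x) ∂μ) * ENNReal.ofReal (t ^ (p - 1 - 1)) ≤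
      ENNReal.ofReal (p - 1)⁻¹ * ∫⁻ x, ENNReal.ofReal (g x) ^ p ∂μ := by
  have hp₁ : 0 < p - 1 := sub_pos.2 hp
  let ν := μ.withDensity fun x ↦ ENNReal.ofReal (g x)
  have hlayer := lintegral_rpow_eq_lintegral_meas_lt_mul ν (ae_of_all _ hg₀)
    (hg.mono_ac (withDensity_absolutelyContinuous μ _)) hp₁
  calc _ ≤ ∫⁻ t in Ioi 0, ν {x | t < g x} * ENNReal.ofReal (t ^ (p - 1 - 1)) := by
        gcongr
        exact withDensity_apply_le _ _
    _ = ENNReal.ofReal (p - 1)⁻¹ * ∫⁻ x, ENNReal.ofReal (g x ^ (p - 1)) ∂ν := by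
        rw [hlayer, ← mul_assoc, ← ENNReal.ofReal_mul (by positivity), inv_mul_cancel₀ hp₁.ne',
          ENNReal.ofReal_one, one_mul]
    _ = ENNReal.ofReal (p - 1)⁻¹ * ∫⁻ x, ENNReal.ofReal (g x) ^ p ∂μ := by
        rw [lintegral_withDensity_eq_lintegral_mul₀ hg.ennreal_ofReal (by fun_prop)]
        congr 1
        refine lintegral_congr fun x ↦ ?_
        rw [Pi.mul_apply, ENNReal.ofReal_rpow_of_nonneg (hg₀ x) (by positivity),
          ← ENNReal.ofReal_mul (hg₀ x), ← Real.rpow_one_add' (hg₀ x) (by linarith),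
          add_sub_cancel]

lemma lintegral_rpow_le_of_meas_lt_le_setLIntegral {F : α → ℝ≥0∞} (hF : AEMeasurable F μ)
    {g : α → ℝ} (hg : AEMeasurable g μ) (hg₀ : 0 ≤ g) (hp : 1 < p) {K : ℝ≥0∞}
    (h : ∀ t : ℝ, 0 < t → μ {x | ENNReal.ofReal t < F x} ≤
      K * (∫⁻ x in {x | t < g x}, ENNReal.ofReal (g x) ∂μ) / ENNReal.ofReal t) :
    ∫⁻ x, F x ^ p ∂μ ≤
      ENNReal.ofReal (p / (p - 1)) * K * ∫⁻ x, ENNReal.ofReal (g x) ^ p ∂μ := by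
  have hp₀ : 0 < p := one_pos.trans hp
  set I : ℝ → ℝ≥0∞ := fun t ↦ ∫⁻ x in {x | t < g x}, ENNReal.ofReal (g x) ∂μ
  have hI : Measurable I := Antitone.measurable fun s t hst ↦
    lintegral_mono_set fun x (hx : t < g x) ↦ hst.trans_lt hx
  have hlevel (t : ℝ) (ht : 0 < t) :
      μ {x | ENNReal.ofReal t < F x} * ENNReal.ofReal (t ^ (p - 1)) ≤
        K * (I t * ENNReal.ofReal (t ^ (p - 1 - 1))) := by
    calc _ ≤ K * I t / ENNReal.ofReal t * ENNReal.ofReal (t ^ (p - 1)) := by gcongr; exact h t ht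
      _ = K * (I t * (ENNReal.ofReal (t ^ (p - 1)) / ENNReal.ofReal t)) := by
          simp only [div_eq_mul_inv]
          ring
      _ = K * (I t * ENNReal.ofReal (t ^ (p - 1 - 1))) := by
          rw [← ENNReal.ofReal_div_of_pos ht, ← Real.rpow_sub_one ht.ne']
  calc ∫⁻ x, F x ^ p ∂μ
      ≤ ENNReal.ofReal p *
          ∫⁻ t in Ioi 0, μ {x | ENNReal.ofReal t < F x} * ENNReal.ofReal (t ^ (p - 1)) :=
        lintegral_rpow_le_lintegral_meas_ofReal_lt_mul hF hp₀
    _ ≤ ENNReal.ofReal p * ∫⁻ t in Ioi 0, K * (I t * ENNReal.ofReal (t ^ (p - 1 - 1))) := by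
        gcongr 1
        exact setLIntegral_mono' measurableSet_Ioi hlevel
    _ ≤ ENNReal.ofReal p *
          (K * (ENNReal.ofReal (p - 1)⁻¹ * ∫⁻ x, ENNReal.ofReal (g x) ^ p ∂μ)) := by
        rw [lintegral_const_mul _ (by fun_prop)]
        gcongr
        exact lintegral_setLIntegral_lt_mul_rpow_le hg hg₀ hp
    _ = ENNReal.ofReal (p / (p - 1)) * K * ∫⁻ x, ENNReal.ofReal (g x) ^ p ∂μ := by
        rw [div_eq_mul_inv, ENNReal.ofReal_mul hp₀.le]
        ring

end LayerCake

section MaximalOperator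

variable {n : ℕ} {μ : Measure (EuclideanSpace ℝ (Fin n))}
  {𝔅 : Set (Set (EuclideanSpace ℝ (Fin n)))} {f g : EuclideanSpace ℝ (Fin n) → ℝ}

lemma lt_maxOp_iff {a : ℝ≥0∞} {x : EuclideanSpace ℝ (Fin n)} :
    a < maxOp μ 𝔅 f x ↔
      ∃ B ∈ 𝔅, x ∈ B ∧ 0 < μ B ∧ a < (∫⁻ y in B, ENNReal.ofReal |f y| ∂μ) / μ B := by
  simp only [maxOp, lt_iSup_iff, exists_prop]

lemma lowerSemicontinuous_maxOp (h𝔅 : ∀ B ∈ 𝔅, IsOpen B) :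
    LowerSemicontinuous (maxOp μ 𝔅 f) := by
  intro x a ha
  obtain ⟨B, hB, hx, hμB, hlt⟩ := lt_maxOp_iff.1 ha
  filter_upwards [(h𝔅 B hB).mem_nhds hx] with y hy
  exact lt_maxOp_iff.2 ⟨B, hB, hy, hμB, hlt⟩

lemma maxOp_le_maxOp_add {a : ℝ≥0∞}
    (hfg : ∀ y, ENNReal.ofReal |f y| ≤ ENNReal.ofReal |g y| + a)
    (x : EuclideanSpace ℝ (Fin n)) :
    maxOp μ 𝔅 f x ≤ maxOp μ 𝔅 g x + a := by
  refine iSup₂_le fun B hB ↦ iSup₂_le fun hx hμB ↦ ?_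
  calc (∫⁻ y in B, ENNReal.ofReal |f y| ∂μ) / μ B
      ≤ (∫⁻ y in B, (ENNReal.ofReal |g y| + a) ∂μ) / μ B := by
        gcongr with y
        exact hfg y
    _ = (∫⁻ y in B, ENNReal.ofReal |g y| ∂μ) / μ B + a * μ B / μ B := by
        rw [lintegral_add_right _ measurable_const, setLIntegral_const, ENNReal.add_div]
    _ ≤ maxOp μ 𝔅 g x + a := by
        gcongr
        · exact le_iSup₂_of_le B hB (le_iSup₂_of_le hx hμB le_rfl)
        · exact ENNReal.div_le_of_le_mul le_rfl

/-- The weak type `(1,1)` inequality for `M_{𝔅,μ}` with constant `K`. Functions are not required to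
be measurable; their `L¹` norm is the lower integral `∫⁻`. -/
def IsWeakTypeOneOne (μ : Measure (EuclideanSpace ℝ (Fin n)))
    (𝔅 : Set (Set (EuclideanSpace ℝ (Fin n)))) (K : ℝ≥0∞) : Prop :=
  ∀ (f : EuclideanSpace ℝ (Fin n) → ℝ) (t : ℝ), 0 < t →
    μ {x | ENNReal.ofReal t < maxOp μ 𝔅 f x} ≤
      K * (∫⁻ x, ENNReal.ofReal |f x| ∂μ) / ENNReal.ofReal t

lemma setOf_lt_maxOp_subset_indicator {t : ℝ} (ht : 0 ≤ t) :
    {x | ENNReal.ofReal t < maxOp μ 𝔅 f x} ⊆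
      {x | ENNReal.ofReal (t / 2) < maxOp μ 𝔅 ({y | t < 2 * |f y|}.indicator f) x} := by
  have hsplit (y : EuclideanSpace ℝ (Fin n)) : ENNReal.ofReal |f y| ≤
      ENNReal.ofReal |{y | t < 2 * |f y|}.indicator f y| + ENNReal.ofReal (t / 2) := by
    by_cases hy : t < 2 * |f y|
    · rw [indicator_of_mem (by exact hy)]
      exact le_self_add
    · rw [indicator_of_notMem (by exact hy)]
      refine (ENNReal.ofReal_le_ofReal ?_).trans le_add_self
      linarith
  intro x hx
  have hlt := (mem_ofPred.1 hx).trans_le (maxOp_le_maxOp_add hsplit x)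
  have hhalves : ENNReal.ofReal t = ENNReal.ofReal (t / 2) + ENNReal.ofReal (t / 2) := by
    rw [← ENNReal.ofReal_add (by positivity) (by positivity), add_halves]
  exact lt_of_add_lt_add_right (hhalves ▸ hlt)

lemma IsWeakTypeOneOne.meas_lt_le_setLIntegral {K : ℝ≥0∞} (h : IsWeakTypeOneOne μ 𝔅 K)
    {t : ℝ} (ht : 0 < t) :
    μ {x | ENNReal.ofReal t < maxOp μ 𝔅 f x} ≤
      K * (∫⁻ x in {x | t < 2 * |f x|}, ENNReal.ofReal (2 * |f x|) ∂μ) / ENNReal.ofReal t := by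
  set A := {x | t < 2 * |f x|}
  have hnorm : ∫⁻ x, ENNReal.ofReal |A.indicator f x| ∂μ ≤ ∫⁻ x in A, ENNReal.ofReal |f x| ∂μ := by
    refine (lintegral_mono fun x ↦ ?_).trans (lintegral_indicator_le _ A)
    by_cases hx : x ∈ A <;> simp [hx]
  calc μ {x | ENNReal.ofReal t < maxOp μ 𝔅 f x}
      ≤ K * (∫⁻ x, ENNReal.ofReal |A.indicator f x| ∂μ) / ENNReal.ofReal (t / 2) :=
        (measure_mono (setOf_lt_maxOp_subset_indicator ht.le)).trans (h _ _ (half_pos ht))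
    _ ≤ K * (∫⁻ x in A, ENNReal.ofReal |f x| ∂μ) / ENNReal.ofReal (t / 2) := by gcongr
    _ = K * (2 * ∫⁻ x in A, ENNReal.ofReal |f x| ∂μ) / ENNReal.ofReal t := by
        rw [ENNReal.ofReal_div_of_pos two_pos, ENNReal.ofReal_ofNat]
        simp only [div_eq_mul_inv]
        rw [ENNReal.mul_inv (by simp) (by simp), inv_inv]
        ring
    _ = K * (∫⁻ x in A, ENNReal.ofReal (2 * |f x|) ∂μ) / ENNReal.ofReal t := by
        rw [← lintegral_const_mul' _ _ ENNReal.ofNat_ne_top]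
        simp only [ENNReal.ofReal_mul zero_le_two, ENNReal.ofReal_ofNat]

theorem IsWeakTypeOneOne.lintegral_maxOp_rpow_le {K : ℝ≥0∞} (h : IsWeakTypeOneOne μ 𝔅 K)
    (h𝔅 : ∀ B ∈ 𝔅, IsOpen B) (hf : AEMeasurable f μ) {p : ℝ} (hp : 1 < p) :
    ∫⁻ x, maxOp μ 𝔅 f x ^ p ∂μ ≤
      ENNReal.ofReal (p / (p - 1)) * K * 2 ^ p * ∫⁻ x, ENNReal.ofReal |f x| ^ p ∂μ := by
  have hp₀ : 0 ≤ p := by linarith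
  calc ∫⁻ x, maxOp μ 𝔅 f x ^ p ∂μ
      ≤ ENNReal.ofReal (p / (p - 1)) * K * ∫⁻ x, ENNReal.ofReal (2 * |f x|) ^ p ∂μ :=
        lintegral_rpow_le_of_meas_lt_le_setLIntegral
          (lowerSemicontinuous_maxOp h𝔅).measurable.aemeasurable (by fun_prop)
          (fun x ↦ by positivity) hp fun t ht ↦ h.meas_lt_le_setLIntegral ht
    _ = _ := by
        simp only [ENNReal.ofReal_mul zero_le_two, ENNReal.ofReal_ofNat,
          ENNReal.mul_rpow_of_nonneg _ _ hp₀]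
        rw [lintegral_const_mul' _ _ (by simp), mul_assoc _ (2 ^ p)]

end MaximalOperator

section HomotheticCopies

variable {n : ℕ} {μ : Measure (EuclideanSpace ℝ (Fin n))} {D R : Set (EuclideanSpace ℝ (Fin n))}
  {δ : ℝ}

lemma IsAxisRect.isOpenSymmConvex (hR : IsAxisRect R) : IsOpenSymmConvex R := by
  obtain ⟨a, b, -, rfl⟩ := hR
  refine ⟨WithLp.toLp 2 fun i ↦ (a i + b i) / 2, _, isOpen_setOf_abs_lt fun i ↦ (b i - a i) / 2,
    absConvex_setOf_abs_lt _, ?_⟩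
  ext x
  simp only [mem_vadd_set_iff_neg_vadd_mem, vadd_eq_add, mem_ofPred_eq, PiLp.add_apply,
    PiLp.neg_apply, abs_lt, mem_Ioo]
  refine forall_congr' fun i ↦ ⟨fun h ↦ ?_, fun h ↦ ?_⟩ <;> constructor <;> linarith [h.1, h.2]

lemma IsRect.isOpenSymmConvex (hR : IsRect R) : IsOpenSymmConvex R := by
  obtain ⟨f, S, hS, rfl⟩ := hR
  exact hS.isOpenSymmConvex.image_isometryEquiv f

lemma homCopies_vadd (c : EuclideanSpace ℝ (Fin n)) (D : Set (EuclideanSpace ℝ (Fin n))) :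
    homCopies (c +ᵥ D) = homCopies D := by
  have hcopy (y : EuclideanSpace ℝ (Fin n)) (s : ℝ) : y +ᵥ s • (c +ᵥ D) = (y + s • c) +ᵥ s • D := by
    simp only [← image_vadd, ← image_smul, image_image, vadd_eq_add, smul_add, add_assoc]
  ext B
  constructor
  · rintro ⟨y, s, hs, rfl⟩
    exact ⟨y + s • c, s, hs, hcopy y s⟩
  · rintro ⟨y, s, hs, rfl⟩
    exact ⟨y - s • c, s, hs, by rw [hcopy, sub_add_cancel]⟩

lemma isOpen_of_mem_homCopies (hD : IsOpen D) {B : Set (EuclideanSpace ℝ (Fin n))}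
    (hB : B ∈ homCopies D) : IsOpen B := by
  obtain ⟨z, s, hs, rfl⟩ := hB
  exact (hD.smul₀ hs.ne').vadd z

lemma DoublingWrt.measure_vadd_two_mul_smul_le (h : DoublingWrt μ (homCopies D) δ)
    (hD : Balanced ℝ D) (z : EuclideanSpace ℝ (Fin n)) {s : ℝ} (hs : 0 < s) :
    μ (z +ᵥ (2 * s) • D) ≤ ENNReal.ofReal δ * μ (z +ᵥ s • D) := by
  have hdilate : -z +ᵥ (2 : ℝ) • (z +ᵥ s • D) = z +ᵥ (2 * s) • D := by
    simp only [← image_vadd, ← image_smul, image_image, vadd_eq_add]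
    exact image_congr fun d _ ↦ by module
  have hsub : z +ᵥ s • D ⊆ z +ᵥ (2 * s) • D :=
    vadd_set_mono <| hD.smul_mono <| by
      rw [norm_mul, Real.norm_ofNat]
      linarith [norm_nonneg s]
  simpa only [hdilate] using h _ ⟨z, s, hs, rfl⟩ (-z) (hdilate ▸ hsub)

lemma DoublingWrt.measure_vadd_two_pow_mul_smul_le (h : DoublingWrt μ (homCopies D) δ)
    (hD : Balanced ℝ D) (z : EuclideanSpace ℝ (Fin n)) {s : ℝ} (hs : 0 < s) (k : ℕ) :
    μ (z +ᵥ (2 ^ k * s) • D) ≤ ENNReal.ofReal δ ^ k * μ (z +ᵥ s • D) := by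
  induction k with
  | zero => simp
  | succ k ih =>
    calc μ (z +ᵥ (2 ^ (k + 1) * s) • D) = μ (z +ᵥ (2 * (2 ^ k * s)) • D) := by
          rw [pow_succ', mul_assoc]
      _ ≤ ENNReal.ofReal δ * μ (z +ᵥ (2 ^ k * s) • D) :=
          h.measure_vadd_two_mul_smul_le hD z (by positivity)
      _ ≤ ENNReal.ofReal δ * (ENNReal.ofReal δ ^ k * μ (z +ᵥ s • D)) := by gcongr
      _ = ENNReal.ofReal δ ^ (k + 1) * μ (z +ᵥ s • D) := by rw [pow_succ', mul_assoc]

lemma DoublingWrt.measure_vadd_five_mul_smul_le (h : DoublingWrt μ (homCopies D) δ)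
    (hD : Balanced ℝ D) (z : EuclideanSpace ℝ (Fin n)) {s : ℝ} (hs : 0 < s) :
    μ (z +ᵥ (5 * s) • D) ≤ ENNReal.ofReal δ ^ 3 * μ (z +ᵥ s • D) := by
  refine (measure_mono (vadd_set_mono (hD.smul_mono ?_))).trans
    (h.measure_vadd_two_pow_mul_smul_le hD z hs 3)
  rw [norm_mul, norm_mul]
  gcongr
  norm_num

lemma DoublingWrt.mul_measure_biUnion_le_lintegral (h : DoublingWrt μ (homCopies D) δ)
    (hopen : IsOpen D) (hD : AbsConvex ℝ D) (φ : EuclideanSpace ℝ (Fin n) → ℝ≥0∞) {a : ℝ≥0∞}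
    {t : Set (EuclideanSpace ℝ (Fin n) × ℝ)} (hfin : t.Finite) (hpos : ∀ q ∈ t, 0 < q.2)
    (ht : ∀ q ∈ t, a * μ (q.1 +ᵥ q.2 • D) ≤ ∫⁻ y in q.1 +ᵥ q.2 • D, φ y ∂μ) :
    a * μ (⋃ q ∈ t, (q.1 +ᵥ q.2 • D)) ≤ ENNReal.ofReal δ ^ 3 * ∫⁻ y, φ y ∂μ := by
  obtain rfl | hne := D.eq_empty_or_nonempty
  · simp
  obtain ⟨R, hR⟩ := (hfin.image Prod.snd).bddAbove
  obtain ⟨u, hut, hdisj, hcover⟩ := exists_pairwiseDisjoint_biUnion_vadd_smul_subset hD hne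
    (fun q hq ↦ (hpos q hq).le) fun q hq ↦ hR (mem_image_of_mem _ hq)
  have hcopy (q) (hq : q ∈ t) : IsOpen (q.1 +ᵥ q.2 • D) :=
    isOpen_of_mem_homCopies hopen ⟨q.1, q.2, hpos q hq, rfl⟩
  have hu : u.Countable := (hfin.subset hut).countable
  calc a * μ (⋃ q ∈ t, (q.1 +ᵥ q.2 • D))
      ≤ a * ∑' q : u, μ (q.1.1 +ᵥ (5 * q.1.2) • D) := by
        gcongr
        exact (measure_mono hcover).trans (measure_biUnion_le μ hu _)
    _ ≤ a * ∑' q : u, ENNReal.ofReal δ ^ 3 * μ (q.1.1 +ᵥ q.1.2 • D) := by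
        gcongr with q
        exact h.measure_vadd_five_mul_smul_le hD.1 _ (hpos q (hut q.2))
    _ = ENNReal.ofReal δ ^ 3 * ∑' q : u, a * μ (q.1.1 +ᵥ q.1.2 • D) := by
        rw [ENNReal.tsum_mul_left, ENNReal.tsum_mul_left, mul_left_comm]
    _ ≤ ENNReal.ofReal δ ^ 3 * ∑' q : u, ∫⁻ y in q.1.1 +ᵥ q.1.2 • D, φ y ∂μ := by
        gcongr with q
        exact ht q (hut q.2)
    _ = ENNReal.ofReal δ ^ 3 * ∫⁻ y in ⋃ q ∈ u, (q.1 +ᵥ q.2 • D), φ y ∂μ := by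
        rw [lintegral_biUnion hu
          (fun q hq ↦ (hcopy q (hut hq)).measurableSet) hdisj]
    _ ≤ ENNReal.ofReal δ ^ 3 * ∫⁻ y, φ y ∂μ := by
        gcongr
        exact Measure.restrict_le_self

theorem DoublingWrt.isWeakTypeOneOne [IsLocallyFiniteMeasure μ]
    (h : DoublingWrt μ (homCopies D) δ) (hopen : IsOpen D) (hD : AbsConvex ℝ D) :
    IsWeakTypeOneOne μ (homCopies D) (ENNReal.ofReal δ ^ 3) := by
  intro f t ht
  set a := ENNReal.ofReal t
  have hlevel : IsOpen {x | a < maxOp μ (homCopies D) f x} :=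
    (lowerSemicontinuous_maxOp fun _ ↦ isOpen_of_mem_homCopies hopen).isOpen_preimage a
  rw [hlevel.measure_eq_iSup_isCompact]
  refine iSup₂_le fun K hK ↦ iSup_le fun hcompact ↦ ?_
  let G : Set (EuclideanSpace ℝ (Fin n) × ℝ) := {q | 0 < q.2 ∧
    a * μ (q.1 +ᵥ q.2 • D) ≤ ∫⁻ y in q.1 +ᵥ q.2 • D, ENNReal.ofReal |f y| ∂μ}
  have hcover : K ⊆ ⋃ q ∈ G, (q.1 +ᵥ q.2 • D) := fun x hx ↦ by
    obtain ⟨_, ⟨z, s, hs, rfl⟩, hxB, -, hlt⟩ := lt_maxOp_iff.1 (hK hx)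
    exact mem_iUnion₂.2 ⟨(z, s), ⟨hs, ENNReal.mul_le_of_le_div hlt.le⟩, hxB⟩
  obtain ⟨T, hTG, hfin, hKT⟩ := hcompact.elim_finite_subcover_image
    (fun q hq ↦ isOpen_of_mem_homCopies hopen ⟨q.1, q.2, hq.1, rfl⟩) hcover
  rw [ENNReal.le_div_iff_mul_le (.inl (ENNReal.ofReal_pos.2 ht).ne') (.inl ENNReal.ofReal_ne_top),
    mul_comm]
  calc a * μ K ≤ a * μ (⋃ q ∈ T, (q.1 +ᵥ q.2 • D)) := by gcongr
    _ ≤ ENNReal.ofReal δ ^ 3 * ∫⁻ y, ENNReal.ofReal |f y| ∂μ :=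
        h.mul_measure_biUnion_le_lintegral hopen hD _ hfin (fun q hq ↦ (hTG hq).1)
          fun q hq ↦ (hTG hq).2

end HomotheticCopies

theorem statement12_general (n : ℕ) (δ : ℝ) (hδ : 0 < δ) :
    (∃ C : ℝ, 0 < C ∧
      ∀ R₀ : Set (EuclideanSpace ℝ (Fin n)), IsOpenSymmConvex R₀ →
      ∀ μ : Measure (EuclideanSpace ℝ (Fin n)), IsLocallyFiniteMeasure μ →
        DoublingWrt μ (homCopies R₀) δ →
        ∀ f : EuclideanSpace ℝ (Fin n) → ℝ, ∀ lam : ℝ, 0 < lam →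
          μ {x | ENNReal.ofReal lam < maxOp μ (homCopies R₀) f x}
            ≤ ENNReal.ofReal C * (∫⁻ x, ENNReal.ofReal |f x| ∂μ) / ENNReal.ofReal lam) ∧
    (∀ p : ℝ, 1 < p → ∃ C : ℝ, 0 < C ∧
      ∀ R₀ : Set (EuclideanSpace ℝ (Fin n)), IsOpenSymmConvex R₀ →
      ∀ μ : Measure (EuclideanSpace ℝ (Fin n)), IsLocallyFiniteMeasure μ →
        DoublingWrt μ (homCopies R₀) δ →
        ∀ f : EuclideanSpace ℝ (Fin n) → ℝ, AEMeasurable f μ →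
          ∫⁻ x, maxOp μ (homCopies R₀) f x ^ p ∂μ
            ≤ ENNReal.ofReal (C ^ p) * ∫⁻ x, ENNReal.ofReal |f x| ^ p ∂μ) := by
  refine ⟨⟨δ ^ 3, by positivity, ?_⟩, fun p hp ↦ ?_⟩
  · rintro _ ⟨c, D, hopen, hD, rfl⟩ μ _ hμ f t ht
    rw [homCopies_vadd] at hμ ⊢
    rw [ENNReal.ofReal_pow hδ.le]
    exact hμ.isWeakTypeOneOne hopen hD f t ht
  · have hp₀ : 0 < p := one_pos.trans hp
    have : 0 < p - 1 := sub_pos.2 hp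
    refine ⟨(p / (p - 1) * δ ^ 3 * 2 ^ p) ^ p⁻¹, by positivity, ?_⟩
    rintro _ ⟨c, D, hopen, hD, rfl⟩ μ _ hμ f hf
    rw [homCopies_vadd] at hμ ⊢
    rw [Real.rpow_inv_rpow (by positivity) hp₀.ne', ENNReal.ofReal_mul (by positivity),
      ENNReal.ofReal_mul (by positivity), ENNReal.ofReal_pow hδ.le,
      ← ENNReal.ofReal_rpow_of_pos two_pos, ENNReal.ofReal_ofNat]
    exact (hμ.isWeakTypeOneOne hopen hD).lintegral_maxOp_rpow_le
      (fun _ ↦ isOpen_of_mem_homCopies hopen) hf hp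

/-- Proposition `p.noboundarymass` (iii) of the paper. For measures
doubling with constant `δ` with respect to the family of homothetic copies of a fixed
rectangle, the maximal operator `M_{𝔎,μ}` is of weak type `(1,1)` and bounded on
`L^p(μ)` for every `1 < p`, with constants depending only on `δ`, `n` and `p` (hence
chosen uniformly before the measure and the rectangle). -/
theorem statement12 (n : ℕ) (δ : ℝ) (hδ : 1 < δ) :
    (∃ C : ℝ, 0 < C ∧
      ∀ R₀ : Set (EuclideanSpace ℝ (Fin n)), IsRect R₀ →
      ∀ μ : Measure (EuclideanSpace ℝ (Fin n)), IsLocallyFiniteMeasure μ → μ ≠ 0 →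
        DoublingWrt μ (homCopies R₀) δ →
        ∀ f : EuclideanSpace ℝ (Fin n) → ℝ, Integrable f μ → ∀ lam : ℝ, 0 < lam →
          μ {x | ENNReal.ofReal lam < maxOp μ (homCopies R₀) f x}
            ≤ ENNReal.ofReal C * (∫⁻ x, ENNReal.ofReal |f x| ∂μ) / ENNReal.ofReal lam) ∧
    (∀ p : ℝ, 1 < p → ∃ C : ℝ, 0 < C ∧
      ∀ R₀ : Set (EuclideanSpace ℝ (Fin n)), IsRect R₀ →
      ∀ μ : Measure (EuclideanSpace ℝ (Fin n)), IsLocallyFiniteMeasure μ → μ ≠ 0 →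
        DoublingWrt μ (homCopies R₀) δ →
        ∀ f : EuclideanSpace ℝ (Fin n) → ℝ, Measurable f →
          ∫⁻ x, maxOp μ (homCopies R₀) f x ^ p ∂μ
            ≤ ENNReal.ofReal (C ^ p) * ∫⁻ x, ENNReal.ofReal |f x| ^ p ∂μ) :=
  ⟨(statement12_general n δ (one_pos.trans hδ)).1.imp fun _ h ↦
      ⟨h.1, fun R₀ hR μ hμ _ hd f _ ↦ h.2 R₀ hR.isOpenSymmConvex μ hμ hd f⟩,
    fun p hp ↦ ((statement12_general n δ (one_pos.trans hδ)).2 p hp).imp fun _ h ↦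
      ⟨h.1, fun R₀ hR μ hμ _ hd f hf ↦ h.2 R₀ hR.isOpenSymmConvex μ hμ hd f hf.aemeasurable⟩⟩
end

section
/- Let 𝔅 be a homothecy invariant basis of nonempty bounded open convex subsets of ℝⁿ, with associated homothecy invariant rectangle basis 𝔊 = {R_B : B ∈ 𝔅} satisfying B ⊆ R_B ⊆ h_B(B) for a homothety h_B of ratio n^{3/2} centered at a point of B. Let μ, ν be locally finite nonnegative Borel measures with μ nonzero and doubling with respect to 𝔅. If M_{𝔅,μ} satisfies the Tauberian condition at some level γ ∈ (0,1) with respect to ν (i.e. ν({M_{𝔅,μ}(1_E) > γ}) ≤ c·ν(E) for all Borel E and some c > 0), then for every α ∈ (γ,1) there exists c' > 0 such that ν({x ∈ ℝⁿ : M_{𝔊,μ}(1_E)(x) > α}) ≤ c'·ν(E) for every Borel set E. -/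
open MeasureTheory Set Filter
open scoped ENNReal Topology Pointwise

open scoped NNReal

/-!
Around a Minkowski point, which Helly's theorem provides, a bounded open convex set `B ⊆ ℝⁿ` has a
gauge that is symmetric up to the factor `n + 1`, and `R ⊆ h(B)` makes the gauges of `B` and `R`
comparable. All constants below depend only on `n`, the ratio of `h`, the doubling constant and
`θ = α / γ`, and not on `B`.

For such gauges doubling forbids concentration of `μ` near the boundary of a ball: for some `ε > 0`,
enlarging a ball by the factor `1 + ε` multiplies its measure by at most `θ`. Hence, if `E` has
density more than `α = γ θ` in `R`, averaging over the positions of a small homothetic copy of `B`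
yields one that meets `R` and in which `E` has density more than `γ`. This copy lies in the halo of
`E` at level `γ`. Since `γ θ < 1`, passing to the halo again enlarges it by the factor `1 + ε`, so
that after a bounded number of steps it covers `R`. Each step multiplies the `ν`-measure by at most
`1 + c`, where `c` is the Tauberian constant at level `γ`.
-/

section GaugeBall

variable {E : Type*} [NormedAddCommGroup E] [NormedSpace ℝ E]

/-- The ball of centre `x` and radius `r` for the (asymmetric) distance `gauge K (y - x)`. For an
open convex `K` containing the origin and `0 < r` it is the homothetic copy `x +ᵥ r • K`. -/
def gaugeBall (K : Set E) (x : E) (r : ℝ) : Set E := {y | gauge K (y - x) < r}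

theorem mem_gaugeBall {K : Set E} {x y : E} {r : ℝ} :
    y ∈ gaugeBall K x r ↔ gauge K (y - x) < r := Iff.rfl

theorem gaugeBall_mono {K : Set E} {r r' : ℝ} (h : r ≤ r') (x : E) :
    gaugeBall K x r ⊆ gaugeBall K x r' :=
  fun _ hy ↦ lt_of_lt_of_le hy h

theorem vadd_smul_gaugeBall (K : Set E) (x y : E) (r : ℝ) {c : ℝ} (hc : 0 < c) :
    y +ᵥ c • gaugeBall K x r = gaugeBall K (y + c • x) (c * r) := by
  ext z
  have hz : c⁻¹ • (-y + z) - x = c⁻¹ • (z - (y + c • x)) := by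
    rw [smul_sub, smul_add, smul_add, smul_smul, inv_mul_cancel₀ hc.ne', smul_neg]
    module
  rw [mem_vadd_set_iff_neg_vadd_mem, mem_smul_set_iff_inv_smul_mem₀ hc.ne', mem_gaugeBall,
    vadd_eq_add, hz, gauge_smul_of_nonneg (inv_nonneg.2 hc.le), smul_eq_mul,
    inv_mul_lt_iff₀ hc, mem_gaugeBall]

theorem vadd_gaugeBall_zero (K : Set E) (x : E) (r : ℝ) :
    x +ᵥ gaugeBall K 0 r = gaugeBall K x r := by
  simpa using vadd_smul_gaugeBall K 0 x r one_pos

theorem le_mul_gauge {K : Set E} (hK : Absorbent ℝ K) {f : E → ℝ}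
    (hf : ∀ b : ℝ, 0 ≤ b → ∀ x, f (b • x) = b * f x) {M : ℝ} (hM : 0 ≤ M)
    (h : ∀ x ∈ K, f x ≤ M) (x : E) : f x ≤ M * gauge K x := by
  suffices ∀ r > gauge K x, f x ≤ M * r from
    ge_of_tendsto ((continuous_const_mul M).continuousWithinAt (s := Ioi (gauge K x)))
      (eventually_nhdsWithin_of_forall this)
  intro r hr
  obtain ⟨b, hb, hbr, k, hk, rfl⟩ := exists_lt_of_gauge_lt hK hr
  calc f (b • k) = b * f k := hf b hb.le k
    _ ≤ b * M := by gcongr; exact h k hk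
    _ ≤ M * r := by rw [mul_comm]; gcongr

/-- A bounded convex neighbourhood of the origin whose gauge is symmetric up to the factor `C`, so
that `gauge K` is a norm except for this controlled asymmetry. -/
structure IsGaugeBody (C : ℝ) (K : Set E) : Prop where
  convex : Convex ℝ K
  mem_nhds_zero : K ∈ 𝓝 0
  isBounded : Bornology.IsBounded K
  gauge_neg_le : ∀ x, gauge K (-x) ≤ C * gauge K x

namespace IsGaugeBody

variable {C : ℝ} {K : Set E}

theorem absorbent (hK : IsGaugeBody C K) : Absorbent ℝ K :=
  absorbent_nhds_zero hK.mem_nhds_zero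

theorem gauge_sub_le_add (hK : IsGaugeBody C K) (x y z : E) :
    gauge K (x - z) ≤ gauge K (x - y) + gauge K (y - z) := by
  simpa using gauge_add_le hK.convex hK.absorbent (x - y) (y - z)

theorem gauge_sub_comm_le (hK : IsGaugeBody C K) (x y : E) :
    gauge K (x - y) ≤ C * gauge K (y - x) := by
  simpa using hK.gauge_neg_le (y - x)

theorem isOpen_gaugeBall (hK : IsGaugeBody C K) (x : E) (r : ℝ) : IsOpen (gaugeBall K x r) :=
  isOpen_lt ((continuous_gauge hK.convex hK.mem_nhds_zero).comp (continuous_sub_right x))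
    continuous_const

theorem gaugeBall_one_subset_vadd (hK : IsGaugeBody C K) (x : E) : gaugeBall K x 1 ⊆ x +ᵥ K := by
  rw [← vadd_gaugeBall_zero]
  refine vadd_set_mono fun y hy ↦ ?_
  rw [mem_gaugeBall, sub_zero] at hy
  exact setOfPred_gauge_lt_one_subset_self hK.convex (mem_of_mem_nhds hK.mem_nhds_zero)
    hK.absorbent hy

theorem isBounded_gaugeBall (hK : IsGaugeBody C K) (x : E) {r : ℝ} (hr : 0 < r) :
    Bornology.IsBounded (gaugeBall K x r) := by
  have h := ((hK.isBounded.subset (by simpa using hK.gaugeBall_one_subset_vadd 0)).smul₀ r).vadd x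
  simpa [vadd_smul_gaugeBall K 0 x 1 hr] using h

end IsGaugeBody

theorem gauge_sub_le_one_of_mem_vadd {K : Set E} {x y : E} (hy : y ∈ x +ᵥ K) :
    gauge K (y - x) ≤ 1 := by
  obtain ⟨k, hk, rfl⟩ := hy
  simpa using gauge_le_one_of_mem hk

theorem vadd_smul_eq_gaugeBall {K : Set E} (hconv : Convex ℝ K) (hopen : IsOpen K)
    (hzero : (0 : E) ∈ K) (x : E) {r : ℝ} (hr : 0 < r) : x +ᵥ r • K = gaugeBall K x r := by
  have hK : K = gaugeBall K 0 1 := by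
    simpa [gaugeBall] using (setOfPred_gauge_lt_one_eq_self_of_isOpen hconv hzero hopen).symm
  conv_lhs => rw [hK, vadd_smul_gaugeBall K 0 x 1 hr, smul_zero, add_zero, mul_one]

end GaugeBall

section MinkowskiPoint

variable {E : Type*} [NormedAddCommGroup E] [NormedSpace ℝ E]

theorem sum_mem_card_smul {ι : Type*} {K : Set E} (hK : Convex ℝ K) (hne : K.Nonempty)
    (I : Finset ι) {f : ι → E} (hf : ∀ i ∈ I, f i ∈ K) : ∑ i ∈ I, f i ∈ (I.card : ℝ) • K := by
  classical
  induction I using Finset.induction with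
  | empty => simp [zero_smul_set hne]
  | insert i I hi ih =>
    rw [Finset.sum_insert hi, Finset.card_insert_of_notMem hi, Nat.cast_succ, add_comm (f i),
      hK.add_smul (Nat.cast_nonneg _) zero_le_one, one_smul]
    exact add_mem_add (ih fun j hj ↦ hf j (Finset.mem_insert_of_mem hj))
      (hf i (Finset.mem_insert_self i I))

variable [FiniteDimensional ℝ E]

open Module (finrank)

/- Helly: `d + 1` of the sets `(x + d K) / (d + 1)`, `x ∈ K`, share the centroid of the `d + 1`
corresponding points `x`. Fewer points are completed by repetitions of a fixed one. -/
theorem exists_forall_succ_smul_sub_mem_smul {K : Set E} (hK : Convex ℝ K) (hcomp : IsCompact K)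
    (hne : K.Nonempty) :
    ∃ p, ∀ x ∈ K, ((finrank ℝ E : ℝ) + 1) • p - x ∈ (finrank ℝ E : ℝ) • K := by
  set d := (finrank ℝ E : ℝ)
  have hd : d + 1 ≠ 0 := by positivity
  have mem_iff (p x : E) :
      p ∈ (d + 1)⁻¹ • (x +ᵥ d • K) ↔ (d + 1) • p - x ∈ d • K := by
    rw [mem_smul_set_iff_inv_smul_mem₀ (inv_ne_zero hd), inv_inv, mem_vadd_set_iff_neg_vadd_mem,
      vadd_eq_add, neg_add_eq_sub]
  suffices ∀ I : Finset K, I.card ≤ finrank ℝ E + 1 →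
      (⋂ x ∈ I, (d + 1)⁻¹ • ((x : E) +ᵥ d • K)).Nonempty by
    obtain ⟨p, hp⟩ := Convex.helly_theorem_compact'
      (fun x : K ↦ ((hK.smul d).vadd (x : E)).smul (d + 1)⁻¹)
      (fun x : K ↦ ((hcomp.smul d).vadd (x : E)).smul (d + 1)⁻¹) this
    exact ⟨p, fun x hx ↦ (mem_iff p x).1 (mem_iInter.1 hp ⟨x, hx⟩)⟩
  intro I hI
  obtain ⟨x₀, hx₀⟩ := hne
  have hId : (I.card : ℝ) ≤ (finrank ℝ E : ℝ) + 1 := by exact_mod_cast hI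
  classical
  refine ⟨(d + 1)⁻¹ • (∑ x ∈ I, (x : E) + (d + 1 - I.card) • x₀), mem_iInter₂.2 fun x hx ↦ ?_⟩
  have hsum := sum_mem_card_smul hK ⟨x₀, hx₀⟩ (I.erase x) fun y _ ↦ y.2
  have hcard : d = (I.erase x).card + (d + 1 - I.card) := by
    rw [← Finset.card_erase_add_one hx]; push_cast; ring
  rw [mem_iff, smul_inv_smul₀ hd, ← Finset.sum_erase_add I _ hx, hcard,
    hK.add_smul (Nat.cast_nonneg _) (sub_nonneg.2 hId), ← hcard]
  convert add_mem_add hsum (smul_mem_smul_set (a := d + 1 - (I.card : ℝ)) hx₀) using 1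
  abel

theorem exists_mem_forall_sub_smul_sub_mem {K : Set E} (hconv : Convex ℝ K) (hopen : IsOpen K)
    (hbdd : Bornology.IsBounded K) (hne : K.Nonempty) :
    ∃ p ∈ K, ∀ x ∈ K, p - ((finrank ℝ E : ℝ) + 1)⁻¹ • (x - p) ∈ K := by
  obtain ⟨p, hp⟩ := exists_forall_succ_smul_sub_mem_smul hconv.closure
    hbdd.isCompact_closure hne.closure
  set d := (finrank ℝ E : ℝ)
  have hd : d + 1 ≠ 0 := by positivity
  have combo_mem {x k : E} (hx : x ∈ K) (hk : k ∈ closure K) :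
      (d + 1)⁻¹ • x + (d / (d + 1)) • k ∈ K := by
    have := hconv.combo_interior_closure_mem_interior (hopen.interior_eq.symm ▸ hx) hk
      (a := (d + 1)⁻¹) (b := d / (d + 1)) (by positivity) (by positivity) (by field_simp; ring)
    rwa [hopen.interior_eq] at this
  have exists_antipode {x : E} (hx : x ∈ K) :
      ∃ k ∈ closure K, (d + 1)⁻¹ • x + (d / (d + 1)) • k = p := by
    obtain ⟨k, hk, hkp : d • k = (d + 1) • p - x⟩ := hp x (subset_closure hx)
    refine ⟨k, hk, ?_⟩
    rw [div_eq_inv_mul, mul_smul, ← smul_add, hkp, add_sub_cancel, inv_smul_smul₀ hd]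
  have hpK : p ∈ K := by
    obtain ⟨x, hx⟩ := hne
    obtain ⟨k, hk, rfl⟩ := exists_antipode hx
    exact combo_mem hx hk
  refine ⟨p, hpK, fun x hx ↦ ?_⟩
  obtain ⟨k, hk, hkp⟩ := exists_antipode hx
  convert combo_mem hpK hk using 1
  rw [← eq_sub_iff_add_eq'] at hkp
  rw [hkp]
  module

theorem exists_mem_isGaugeBody_neg_vadd {K : Set E} (hconv : Convex ℝ K) (hopen : IsOpen K)
    (hbdd : Bornology.IsBounded K) (hne : K.Nonempty) :
    ∃ p ∈ K, IsGaugeBody ((finrank ℝ E : ℝ) + 1) (-p +ᵥ K) := by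
  obtain ⟨p, hp, hneg⟩ := exists_mem_forall_sub_smul_sub_mem hconv hopen hbdd hne
  have hnhds : -p +ᵥ K ∈ 𝓝 (0 : E) :=
    (hopen.vadd (-p)).mem_nhds ⟨p, hp, by simp⟩
  refine ⟨p, hp, hconv.vadd _, hnhds, hbdd.vadd _, fun x ↦ ?_⟩
  refine le_mul_gauge (f := fun x ↦ gauge (-p +ᵥ K) (-x)) (absorbent_nhds_zero hnhds)
    (fun b hb y ↦ ?_) (by positivity) ?_ x
  · rw [← smul_neg, gauge_smul_of_nonneg hb, smul_eq_mul]
  · rintro _ ⟨y, hy, rfl⟩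
    refine gauge_le_of_mem (by positivity) ?_
    rw [mem_smul_set_iff_inv_smul_mem₀ (by positivity), mem_vadd_set_iff_neg_vadd_mem]
    convert hneg y hy using 1
    simp only [vadd_eq_add, neg_neg]
    module

end MinkowskiPoint

section EnclosingBody

open Module (finrank)

variable {E : Type*} [NormedAddCommGroup E] [NormedSpace ℝ E] {C L : ℝ} {K Q : Set E}

/- For `q = z + c (b - z)` with `b, z ∈ K` the gauge of `q` is at most `1 + c + c C`. -/
theorem IsGaugeBody.gauge_le_mul_gauge_of_subset_homothety (hK : IsGaugeBody C K) (hC : 0 ≤ C)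
    {c : ℝ} (hc : 0 ≤ c) (hKQ : K ⊆ Q) {z : E} (hz : z ∈ K)
    (hQ : Q ⊆ (fun x ↦ z + c • (x - z)) '' K) (x : E) :
    gauge K x ≤ (1 + c * (1 + C)) * gauge Q x := by
  refine le_mul_gauge (hK.absorbent.mono hKQ)
    (fun b hb y ↦ gauge_smul_of_nonneg hb y) (by positivity) (fun q hq ↦ ?_) x
  obtain ⟨b, hb, rfl⟩ := hQ hq
  have hz1 : gauge K z ≤ 1 := gauge_le_one_of_mem hz
  have hb1 : gauge K b ≤ 1 := gauge_le_one_of_mem hb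
  have hbz : gauge K (b - z) ≤ 1 + C := calc
    gauge K (b - z) ≤ gauge K b + gauge K (-z) := by
      simpa [sub_eq_add_neg] using gauge_add_le hK.convex hK.absorbent b (-z)
    _ ≤ 1 + C * 1 := by gcongr; exact (hK.gauge_neg_le z).trans (by gcongr)
    _ = 1 + C := by ring
  calc gauge K (z + c • (b - z)) ≤ gauge K z + c * gauge K (b - z) := by
        simpa [gauge_smul_of_nonneg hc] using
          gauge_add_le hK.convex hK.absorbent z (c • (b - z))
    _ ≤ 1 + c * (1 + C) := by gcongr

theorem IsGaugeBody.of_subset_of_gauge_le (hK : IsGaugeBody C K) (hC : 0 ≤ C)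
    (hQ : Convex ℝ Q) (hKQ : K ⊆ Q) (hL : 0 ≤ L) (hle : ∀ x, gauge K x ≤ L * gauge Q x) :
    IsGaugeBody (C * L) Q where
  convex := hQ
  mem_nhds_zero := mem_of_superset hK.mem_nhds_zero hKQ
  isBounded := by
    refine (hK.isBounded_gaugeBall 0 (r := L + 1) (by positivity)).subset fun q hq ↦ ?_
    rw [mem_gaugeBall, sub_zero]
    calc gauge K q ≤ L * gauge Q q := hle q
      _ ≤ L * 1 := by gcongr; exact gauge_le_one_of_mem hq
      _ < L + 1 := by linarith
  gauge_neg_le x := calc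
    gauge Q (-x) ≤ gauge K (-x) := gauge_mono hK.absorbent hKQ _
    _ ≤ C * gauge K x := hK.gauge_neg_le x
    _ ≤ C * (L * gauge Q x) := by gcongr; exact hle x
    _ = C * L * gauge Q x := by ring

theorem exists_mem_isGaugeBody_neg_vadd_of_subset_homothety [FiniteDimensional ℝ E] {B R : Set E}
    (hconv : Convex ℝ B) (hopen : IsOpen B) (hbdd : Bornology.IsBounded B) {c : ℝ} (hc : 0 ≤ c)
    (hBR : B ⊆ R) {z : E} (hz : z ∈ B) (hRB : R ⊆ (fun x ↦ z + c • (x - z)) '' B) :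
    ∃ p ∈ B, IsGaugeBody ((finrank ℝ E : ℝ) + 1) (-p +ᵥ B) ∧
      ∀ x, gauge (-p +ᵥ B) x ≤
        (1 + c * (1 + ((finrank ℝ E : ℝ) + 1))) * gauge (-p +ᵥ R) x := by
  obtain ⟨p, hp, hK⟩ := exists_mem_isGaugeBody_neg_vadd hconv hopen hbdd ⟨z, hz⟩
  refine ⟨p, hp, hK, hK.gauge_le_mul_gauge_of_subset_homothety (by positivity) hc
    (vadd_set_mono hBR) (vadd_mem_vadd_set hz) ?_⟩
  rintro _ ⟨q, hq, rfl⟩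
  obtain ⟨b, hb, rfl⟩ := hRB hq
  exact ⟨-p + b, ⟨b, hb, rfl⟩, by simp only [vadd_eq_add]; module⟩

end EnclosingBody

section Averaging

variable {E : Type*} [NormedAddCommGroup E] [NormedSpace ℝ E] [FiniteDimensional ℝ E]
  [MeasurableSpace E] [BorelSpace E]

theorem lintegral_measure_inter_vadd (vol μ : Measure E) [vol.IsAddHaarMeasure] [SFinite μ]
    (A : Set E) {W : Set E} (hW : MeasurableSet W) :
    ∫⁻ x, μ (A ∩ (x +ᵥ W)) ∂vol = vol (-W) * μ A := by
  have hmeas : Measurable fun p : E × E ↦ (-W).indicator (1 : E → ℝ≥0∞) (p.1 - p.2) :=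
    (measurable_one.indicator hW.neg).comp (measurable_fst.sub measurable_snd)
  have hinter (x : E) : μ (A ∩ (x +ᵥ W)) = ∫⁻ y in A, (-W).indicator 1 (x - y) ∂μ := by
    have heq : (fun y ↦ (-W).indicator (1 : E → ℝ≥0∞) (x - y)) = (x +ᵥ W).indicator 1 := by
      ext y
      have hiff : x - y ∈ -W ↔ y ∈ x +ᵥ W := by
        rw [Set.mem_neg, neg_sub, mem_vadd_set_iff_neg_vadd_mem, vadd_eq_add, neg_add_eq_sub]
      by_cases hy : y ∈ x +ᵥ W <;> simp [hiff, hy]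
    have hxW : MeasurableSet (x +ᵥ W) := hW.const_vadd x
    rw [heq, lintegral_indicator_one hxW, Measure.restrict_apply hxW, inter_comm]
  calc ∫⁻ x, μ (A ∩ (x +ᵥ W)) ∂vol
      = ∫⁻ x, ∫⁻ y in A, (-W).indicator 1 (x - y) ∂μ ∂vol := by simp_rw [hinter]
    _ = ∫⁻ y in A, ∫⁻ x, (-W).indicator 1 (x - y) ∂vol ∂μ :=
        lintegral_lintegral_swap hmeas.aemeasurable
    _ = ∫⁻ _ in A, vol (-W) ∂μ := by
        simp_rw [lintegral_sub_right_eq_self, lintegral_indicator_one hW.neg]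
    _ = vol (-W) * μ A := by simp

theorem lintegral_comp_homothety_le (vol : Measure E) [vol.IsAddHaarMeasure] (g : E → ℝ≥0∞)
    (x₀ : E) {l : ℝ} (hl : 1 ≤ l) :
    ∫⁻ x, g (x₀ + l • (x - x₀)) ∂vol ≤ ∫⁻ x, g x ∂vol := by
  have hl0 : l ≠ 0 := by positivity
  calc ∫⁻ x, g (x₀ + l • (x - x₀)) ∂vol
      = ∫⁻ x, g (x₀ + l • x) ∂vol :=
        lintegral_sub_right_eq_self (fun x ↦ g (x₀ + l • x)) x₀
    _ = ∫⁻ x, g (x₀ + x) ∂(vol.map (l • ·)) :=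
        (lintegral_map_equiv (fun x ↦ g (x₀ + x))
          (Homeomorph.smulOfNeZero l hl0).toMeasurableEquiv).symm
    _ ≤ ∫⁻ x, g (x₀ + x) ∂vol := by
        rw [Measure.map_addHaar_smul vol hl0, lintegral_smul_measure]
        refine mul_le_of_le_one_left zero_le (ENNReal.ofReal_le_one.2 ?_)
        rw [abs_of_nonneg (by positivity)]
        exact inv_le_one_of_one_le₀ (one_le_pow₀ hl)
    _ = ∫⁻ x, g x ∂vol := lintegral_add_left_eq_self g x₀

/- Integrate the hypothesis over all centres `x`: each side becomes `vol (-W)` times the measure of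
the full set, the expansion by `l ≥ 1` only decreasing the integral on the right. -/
theorem measure_le_mul_of_forall_inter_vadd_le {μ : Measure E} [SFinite μ] {A A' W : Set E}
    (hWo : IsOpen W) (hWne : W.Nonempty) (hWb : Bornology.IsBounded W) {c : ℝ≥0∞} (hc : c ≠ ∞)
    (x₀ : E) {l : ℝ} (hl : 1 ≤ l)
    (h : ∀ x, μ (A ∩ (x +ᵥ W)) ≤ c * μ (A' ∩ ((x₀ + l • (x - x₀)) +ᵥ W))) :
    μ A ≤ c * μ A' := by
  let vol : Measure E := Measure.addHaar
  have hpos : vol (-W) ≠ 0 := (hWo.neg.measure_pos vol hWne.neg).ne'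
  have hfin : vol (-W) ≠ ∞ := hWb.neg.measure_lt_top.ne
  refine (ENNReal.mul_le_mul_iff_right hpos hfin).1 ?_
  calc vol (-W) * μ A = ∫⁻ x, μ (A ∩ (x +ᵥ W)) ∂vol :=
        (lintegral_measure_inter_vadd vol μ A hWo.measurableSet).symm
    _ ≤ ∫⁻ x, c * μ (A' ∩ ((x₀ + l • (x - x₀)) +ᵥ W)) ∂vol := lintegral_mono h
    _ = c * ∫⁻ x, μ (A' ∩ ((x₀ + l • (x - x₀)) +ᵥ W)) ∂vol := lintegral_const_mul' _ _ hc
    _ ≤ c * ∫⁻ x, μ (A' ∩ (x +ᵥ W)) ∂vol :=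
        mul_le_mul_right (lintegral_comp_homothety_le vol (fun x ↦ μ (A' ∩ (x +ᵥ W))) x₀ hl) c
    _ = vol (-W) * (c * μ A') := by
        rw [lintegral_measure_inter_vadd vol μ A' hWo.measurableSet]; ring

end Averaging

section ThinShells

variable {E : Type*} [NormedAddCommGroup E] [NormedSpace ℝ E]

/-- Enlarging a gauge ball of `K` by the factor `l` multiplies its `μ`-measure at most by `A`. The
doubling property is the case `l = 2`; the absence of mass concentrated near the boundary of balls
is the case of `l` and `A` both close to `1`. -/
def HasDilationBound [MeasurableSpace E] (μ : Measure E) (K : Set E) (l : ℝ) (A : ℝ≥0) : Prop :=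
  ∀ x : E, ∀ r > 0, μ (gaugeBall K x (l * r)) ≤ A * μ (gaugeBall K x r)

theorem HasDilationBound.pow [MeasurableSpace E] {μ : Measure E} {K : Set E} {l : ℝ} {A : ℝ≥0}
    (h : HasDilationBound μ K l A) (hl : 0 < l) (m : ℕ) :
    HasDilationBound μ K (l ^ m) (A ^ m) := by
  induction m with
  | zero => simp [HasDilationBound]
  | succ m ih =>
    intro x r hr
    calc μ (gaugeBall K x (l ^ (m + 1) * r))
        = μ (gaugeBall K x (l * (l ^ m * r))) := by rw [pow_succ', mul_assoc]
      _ ≤ A * μ (gaugeBall K x (l ^ m * r)) := h x _ (by positivity)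
      _ ≤ A * ((A ^ m : ℝ≥0) * μ (gaugeBall K x r)) := by gcongr; exact ih x r hr
      _ = (A ^ (m + 1) : ℝ≥0) * μ (gaugeBall K x r) := by rw [pow_succ']; push_cast; ring

theorem HasDilationBound.of_gauge_le [MeasurableSpace E] {μ : Measure E} {K Q : Set E} {D : ℝ≥0}
    (h : HasDilationBound μ K 2 D) (hK : Absorbent ℝ K) (hKQ : K ⊆ Q) {L : ℝ} (hL : 0 < L)
    (hle : ∀ x, gauge K x ≤ L * gauge Q x) {m : ℕ} (hm : 2 * L ≤ 2 ^ m) :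
    HasDilationBound μ Q 2 (D ^ m) := by
  intro x r hr
  have hQ : gaugeBall Q x (2 * r) ⊆ gaugeBall K x (2 ^ m * r) := fun y hy ↦ calc
    gauge K (y - x) ≤ L * gauge Q (y - x) := hle _
    _ < L * (2 * r) := by gcongr; exact hy
    _ = 2 * L * r := by ring
    _ ≤ 2 ^ m * r := by gcongr
  have hK' : gaugeBall K x r ⊆ gaugeBall Q x r := fun y hy ↦
    (gauge_mono hK hKQ (y - x)).trans_lt hy
  calc μ (gaugeBall Q x (2 * r)) ≤ μ (gaugeBall K x (2 ^ m * r)) := measure_mono hQ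
    _ ≤ (D ^ m : ℝ≥0) * μ (gaugeBall K x r) := h.pow two_pos m x r hr
    _ ≤ (D ^ m : ℝ≥0) * μ (gaugeBall Q x r) := by gcongr

namespace IsGaugeBody

variable {C : ℝ} {K : Set E}

theorem gauge_sub_mem_Ioo_of_mem_shell (hK : IsGaugeBody C K) (hC : 1 ≤ C) {x₀ x y : E}
    {s a ρ : ℝ} (ha : C * a = ρ * s / 4) (ha0 : 0 < a)
    (hy : y ∈ gaugeBall K x₀ ((1 + ρ) * s) \ gaugeBall K x₀ s) (hyx : y ∈ gaugeBall K x a) :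
    gauge K (x - x₀) ∈ Ioo ((1 - ρ / 4) * s) ((1 + 5 * ρ / 4) * s) := by
  obtain ⟨hys, hys'⟩ := hy
  rw [mem_gaugeBall] at hys hys' hyx
  have hxy : gauge K (x - y) < ρ * s / 4 := by
    rw [← ha]
    exact (hK.gauge_sub_comm_le x y).trans_lt (by gcongr)
  have hlower := hK.gauge_sub_le_add y x x₀
  have hupper := hK.gauge_sub_le_add x y x₀
  constructor <;> nlinarith

theorem gaugeBall_subset_outer_shell (hK : IsGaugeBody C K) (hC : 1 ≤ C) {x₀ x : E} {s a ρ : ℝ}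
    (hρ : 0 < ρ) (hρ1 : ρ ≤ 1) (hs : 0 < s) (ha : C * a = ρ * s / 4) (ha0 : 0 < a)
    (hx : gauge K (x - x₀) ∈ Ioo ((1 - ρ / 4) * s) ((1 + 5 * ρ / 4) * s)) :
    gaugeBall K (x₀ + (1 + 3 * ρ) • (x - x₀)) a ⊆
      gaugeBall K x₀ ((1 + 9 * ρ) * s) \ gaugeBall K x₀ ((1 + ρ) * s) := by
  intro y hy
  set x' := x₀ + (1 + 3 * ρ) • (x - x₀) with hx'
  rw [mem_gaugeBall] at hy
  have hgauge : gauge K (x' - x₀) = (1 + 3 * ρ) * gauge K (x - x₀) := by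
    rw [hx', add_sub_cancel_left, gauge_smul_of_nonneg (by positivity), smul_eq_mul]
  have hlower : (1 + 3 * ρ) * ((1 - ρ / 4) * s) < gauge K (x' - x₀) := by
    rw [hgauge]; gcongr; exact hx.1
  have hupper : gauge K (x' - x₀) < (1 + 3 * ρ) * ((1 + 5 * ρ / 4) * s) := by
    rw [hgauge]; gcongr; exact hx.2
  have hx'y : gauge K (x' - y) < ρ * s / 4 := by
    rw [← ha]
    exact (hK.gauge_sub_comm_le x' y).trans_lt (by gcongr)
  have hρs : 0 < ρ * s := by positivity
  have hρρs : ρ * (ρ * s) ≤ ρ * s := mul_le_of_le_one_left hρs.le hρ1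
  constructor
  · rw [mem_gaugeBall]
    nlinarith [hK.gauge_sub_le_add y x' x₀]
  · rw [mem_gaugeBall, not_lt]
    nlinarith [hK.gauge_sub_le_add x' y x₀]

theorem gaugeBall_subset_gaugeBall_homothety (hK : IsGaugeBody C K) (hC : 1 ≤ C) {x₀ x : E}
    {s a ρ : ℝ} (hρ : 0 < ρ) (hρ1 : ρ ≤ 1) (hs : 0 < s) (ha : C * a = ρ * s / 4)
    (hx : gauge K (x - x₀) < (1 + 5 * ρ / 4) * s) :
    gaugeBall K x a ⊆
      gaugeBall K (x₀ + (1 + 3 * ρ) • (x - x₀)) ((28 * C ^ 2 + 1) * a) := by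
  intro y hy
  set x' := x₀ + (1 + 3 * ρ) • (x - x₀) with hx'
  rw [mem_gaugeBall] at hy ⊢
  have hgauge : gauge K (x' - x) = 3 * ρ * gauge K (x - x₀) := by
    rw [show x' - x = (3 * ρ) • (x - x₀) by rw [hx']; module,
      gauge_smul_of_nonneg (by positivity), smul_eq_mul]
  have hxs : gauge K (x - x₀) ≤ 9 / 4 * s := by nlinarith
  calc gauge K (y - x') ≤ gauge K (y - x) + gauge K (x - x') := hK.gauge_sub_le_add y x x'
    _ ≤ gauge K (y - x) + C * (3 * ρ * gauge K (x - x₀)) := by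
        rw [← hgauge]; gcongr; exact hK.gauge_sub_comm_le x x'
    _ ≤ gauge K (y - x) + C * (3 * ρ * (9 / 4 * s)) := by gcongr
    _ = gauge K (y - x) + 27 * C ^ 2 * a := by linear_combination (-27 * C) * ha
    _ < (28 * C ^ 2 + 1) * a := by nlinarith [gauge_nonneg (s := K) (y - x), sq_nonneg C]

end IsGaugeBody

variable [FiniteDimensional ℝ E] [MeasurableSpace E] [BorelSpace E]

namespace IsGaugeBody

variable {C : ℝ} {K : Set E}

theorem measure_gaugeBall_ne_top (hK : IsGaugeBody C K) (μ : Measure E)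
    [IsLocallyFiniteMeasure μ] (x : E) {r : ℝ} (hr : 0 < r) : μ (gaugeBall K x r) ≠ ∞ :=
  (hK.isBounded_gaugeBall x hr).measure_lt_top.ne

theorem measure_le_mul_of_forall_inter_gaugeBall_le (hK : IsGaugeBody C K) {μ : Measure E}
    [SFinite μ] {A A' : Set E} {c : ℝ≥0∞} (hc : c ≠ ∞) {r : ℝ} (hr : 0 < r) (x₀ : E) {l : ℝ}
    (hl : 1 ≤ l)
    (h : ∀ x, (A ∩ gaugeBall K x r).Nonempty →
      μ (A ∩ gaugeBall K x r) ≤ c * μ (A' ∩ gaugeBall K (x₀ + l • (x - x₀)) r)) :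
    μ A ≤ c * μ A' := by
  refine measure_le_mul_of_forall_inter_vadd_le (hK.isOpen_gaugeBall 0 r)
    ⟨0, by simpa [mem_gaugeBall] using hr⟩ (hK.isBounded_gaugeBall 0 hr) hc x₀ hl fun x ↦ ?_
  rw [vadd_gaugeBall_zero, vadd_gaugeBall_zero]
  rcases (A ∩ gaugeBall K x r).eq_empty_or_nonempty with hempty | hne
  · simp [hempty]
  · exact h x hne

/- A small ball meeting the inner shell is pushed into the outer shell by the homothety of ratio
`1 + 3ρ` centred at `x₀`, while staying comparable with its original position. -/
theorem measure_inner_shell_le (hK : IsGaugeBody C K) (hC : 1 ≤ C) {μ : Measure E} [SFinite μ]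
    {D : ℝ≥0} (hD : HasDilationBound μ K 2 D) {m : ℕ} (hm : 28 * C ^ 2 + 1 ≤ 2 ^ m) (x₀ : E)
    {s ρ : ℝ} (hρ : 0 < ρ) (hρ1 : ρ ≤ 1) (hs : 0 < s) :
    μ (gaugeBall K x₀ ((1 + ρ) * s) \ gaugeBall K x₀ s) ≤
      (D ^ m : ℝ≥0) *
        μ (gaugeBall K x₀ ((1 + 9 * ρ) * s) \ gaugeBall K x₀ ((1 + ρ) * s)) := by
  obtain ⟨a, ha0, ha⟩ : ∃ a > 0, C * a = ρ * s / 4 :=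
    ⟨ρ * s / 4 / C, by positivity, by field_simp⟩
  refine hK.measure_le_mul_of_forall_inter_gaugeBall_le ENNReal.coe_ne_top ha0 x₀
    (l := 1 + 3 * ρ) (by linarith) ?_
  rintro x ⟨y, hy, hyx⟩
  have hx := hK.gauge_sub_mem_Ioo_of_mem_shell hC ha ha0 hy hyx
  rw [inter_eq_right.2 (hK.gaugeBall_subset_outer_shell hC hρ hρ1 hs ha ha0 hx)]
  set x' := x₀ + (1 + 3 * ρ) • (x - x₀)
  calc _ ≤ μ (gaugeBall K x a) := measure_mono inter_subset_right
    _ ≤ μ (gaugeBall K x' (2 ^ m * a)) := measure_mono <|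
        (hK.gaugeBall_subset_gaugeBall_homothety hC hρ hρ1 hs ha hx.2).trans
          (gaugeBall_mono (by gcongr) x')
    _ ≤ (D ^ m : ℝ≥0) * μ (gaugeBall K x' a) := hD.pow two_pos m x' a ha0

theorem measureReal_inner_shell_le (hK : IsGaugeBody C K) (hC : 1 ≤ C) {μ : Measure E}
    [IsLocallyFiniteMeasure μ] {D : ℝ≥0} (hD : HasDilationBound μ K 2 D) {m : ℕ}
    (hm : 28 * C ^ 2 + 1 ≤ 2 ^ m) (x₀ : E) {s ρ : ℝ} (hρ : 0 < ρ) (hρ1 : ρ ≤ 1) (hs : 0 < s) :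
    μ.real (gaugeBall K x₀ ((1 + ρ) * s) \ gaugeBall K x₀ s) ≤
      (D : ℝ) ^ m *
        μ.real (gaugeBall K x₀ ((1 + 9 * ρ) * s) \ gaugeBall K x₀ ((1 + ρ) * s)) := by
  have hfin := hK.measure_gaugeBall_ne_top μ x₀ (r := (1 + 9 * ρ) * s) (by positivity)
  have h := ENNReal.toReal_mono
    (ENNReal.mul_ne_top ENNReal.coe_ne_top (measure_ne_top_of_subset sdiff_subset hfin))
    (hK.measure_inner_shell_le hC hD hm x₀ hρ hρ1 hs)
  simpa [ENNReal.toReal_mul, ← measureReal_def] using h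

theorem measureReal_shell (hK : IsGaugeBody C K) (μ : Measure E) [IsLocallyFiniteMeasure μ]
    (x : E) {r r' : ℝ} (hr' : 0 < r') (h : r ≤ r') :
    μ.real (gaugeBall K x r' \ gaugeBall K x r) =
      μ.real (gaugeBall K x r') - μ.real (gaugeBall K x r) :=
  measureReal_sdiff (gaugeBall_mono h x) (hK.isOpen_gaugeBall x r).measurableSet
    (hK.measure_gaugeBall_ne_top μ x hr')

end IsGaugeBody

/- Hole filling: by the shell comparison the measure of the shell of relative width `9⁻¹ ^ j` decays
geometrically in `j`. -/
theorem IsGaugeBody.measureReal_shell_le_pow {C : ℝ} {K : Set E} (hK : IsGaugeBody C K)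
    (hC : 1 ≤ C) {μ : Measure E} [IsLocallyFiniteMeasure μ] {D : ℝ≥0}
    (hD : HasDilationBound μ K 2 D) {m : ℕ} (hm : 28 * C ^ 2 + 1 ≤ 2 ^ m) (x : E) {s : ℝ}
    (hs : 0 < s) (j : ℕ) :
    μ.real (gaugeBall K x ((1 + 9⁻¹ ^ j) * s) \ gaugeBall K x s) ≤
      ((D : ℝ) ^ m / (1 + D ^ m)) ^ j * (D * μ.real (gaugeBall K x s)) := by
  set G : ℝ := (D : ℝ) ^ m
  set F : ℝ → ℝ := fun ρ ↦ μ.real (gaugeBall K x ((1 + ρ) * s)) with hF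
  have hshell {ρ ρ' : ℝ} (hρ : 0 ≤ ρ) (hle : ρ ≤ ρ') :
      μ.real (gaugeBall K x ((1 + ρ') * s) \ gaugeBall K x ((1 + ρ) * s)) = F ρ' - F ρ :=
    hK.measureReal_shell μ x (by nlinarith) (by gcongr)
  have hshell₀ {ρ : ℝ} (hρ : 0 ≤ ρ) :
      μ.real (gaugeBall K x ((1 + ρ) * s) \ gaugeBall K x s) = F ρ - F 0 := by
    simpa using hshell le_rfl hρ
  have hcompare (ρ : ℝ) (hρ : 0 < ρ) (hρ1 : ρ ≤ 1) : F ρ - F 0 ≤ G * (F (9 * ρ) - F ρ) := by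
    have h := hK.measureReal_inner_shell_le hC hD hm x hρ hρ1 hs
    rwa [hshell₀ hρ.le, hshell hρ.le (by linarith)] at h
  have hdecay (j : ℕ) : F (9⁻¹ ^ (j + 1)) - F 0 ≤ G / (1 + G) * (F (9⁻¹ ^ j) - F 0) := by
    have h := hcompare (9⁻¹ ^ (j + 1)) (by positivity) (pow_le_one₀ (by norm_num) (by norm_num))
    rw [show (9 : ℝ) * 9⁻¹ ^ (j + 1) = 9⁻¹ ^ j by rw [pow_succ]; ring] at h
    rw [div_mul_eq_mul_div, le_div_iff₀ (by positivity)]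
    linarith
  have hdouble : F 1 - F 0 ≤ D * F 0 := by
    have h := ENNReal.toReal_mono (ENNReal.mul_ne_top ENNReal.coe_ne_top
      (hK.measure_gaugeBall_ne_top μ x hs)) (hD x s hs)
    rw [ENNReal.toReal_mul, ENNReal.coe_toReal] at h
    simp only [hF, add_zero, one_mul, one_add_one_eq_two]
    exact (sub_le_self _ measureReal_nonneg).trans h
  rw [hshell₀ (by positivity), show μ.real (gaugeBall K x s) = F 0 by simp [hF]]
  calc F (9⁻¹ ^ j) - F 0 ≤ (G / (1 + G)) ^ j * (F (9⁻¹ ^ 0) - F 0) :=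
        le_geom (u := fun j ↦ F (9⁻¹ ^ j) - F 0) (by positivity) j fun k _ ↦ hdecay k
    _ ≤ (G / (1 + G)) ^ j * (D * F 0) := by
        gcongr
        simpa using hdouble

theorem exists_hasDilationBound_one_add {C : ℝ} (hC : 1 ≤ C) (D : ℝ≥0) {θ : ℝ≥0} (hθ : 1 < θ) :
    ∃ ε > 0, ∀ (μ : Measure E) [IsLocallyFiniteMeasure μ] (K : Set E), IsGaugeBody C K →
      HasDilationBound μ K 2 D → HasDilationBound μ K (1 + ε) θ := by
  obtain ⟨m, hm⟩ := pow_unbounded_of_one_lt (28 * C ^ 2 + 1) (one_lt_two (α := ℝ))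
  have hq : (D : ℝ) ^ m / (1 + D ^ m) < 1 := by
    rw [div_lt_one (by positivity)]; linarith
  have hθ' : 0 < (θ : ℝ) - 1 := sub_pos.2 (by exact_mod_cast hθ)
  obtain ⟨j, hj⟩ := exists_pow_lt_of_lt_one (show 0 < ((θ : ℝ) - 1) / (D + 1) by positivity) hq
  refine ⟨9⁻¹ ^ j, by positivity, fun μ _ K hK hD x s hs ↦ ?_⟩
  have hshell := hK.measureReal_shell_le_pow hC hD hm.le x hs j
  have hbig : 0 < (1 + 9⁻¹ ^ j) * s := by positivity
  have hle : s ≤ (1 + 9⁻¹ ^ j) * s := le_mul_of_one_le_left hs.le (by simp)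
  rw [hK.measureReal_shell μ x hbig hle] at hshell
  have hreal : μ.real (gaugeBall K x ((1 + 9⁻¹ ^ j) * s)) ≤ θ * μ.real (gaugeBall K x s) := by
    have hsmall : ((D : ℝ) ^ m / (1 + D ^ m)) ^ j * D ≤ θ - 1 := calc
      _ ≤ ((θ : ℝ) - 1) / (D + 1) * (D + 1) := by gcongr; simp
      _ = θ - 1 := by field_simp
    nlinarith [measureReal_nonneg (μ := μ) (s := gaugeBall K x s)]
  have hfin := hK.measure_gaugeBall_ne_top μ x hs
  have hfin' := hK.measure_gaugeBall_ne_top μ x hbig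
  rw [← ENNReal.toReal_le_toReal hfin' (ENNReal.mul_ne_top ENNReal.coe_ne_top hfin),
    ENNReal.toReal_mul]
  exact hreal

end ThinShells

section Density

variable {E : Type*} [NormedAddCommGroup E] [NormedSpace ℝ E] {C L δ : ℝ} {K Q : Set E}

theorem IsGaugeBody.gaugeBall_subset_gaugeBall_of_inter_vadd_nonempty (hK : IsGaugeBody C K)
    (hC : 0 < C) (hQ : Convex ℝ Q) (hKQ : K ⊆ Q) {w x : E}
    (hne : (gaugeBall K x δ ∩ (w +ᵥ Q)).Nonempty) :
    gaugeBall K x δ ⊆ gaugeBall Q w (1 + (1 + C) * δ) := by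
  obtain ⟨y, hyx, hyw⟩ := hne
  intro z hzx
  rw [mem_gaugeBall] at hyx hzx ⊢
  calc gauge Q (z - w) ≤ gauge Q (y - w) + gauge Q (z - y) := by
        simpa using gauge_add_le hQ (hK.absorbent.mono hKQ) (y - w) (z - y)
    _ ≤ 1 + gauge K (z - y) := by
        gcongr
        exacts [gauge_sub_le_one_of_mem_vadd hyw, gauge_mono hK.absorbent hKQ _]
    _ ≤ 1 + (gauge K (z - x) + C * gauge K (y - x)) := by
        gcongr
        exact (hK.gauge_sub_le_add z x y).trans (by gcongr; exact hK.gauge_sub_comm_le x y)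
    _ < 1 + (δ + C * δ) := by gcongr
    _ = 1 + (1 + C) * δ := by ring

theorem IsGaugeBody.vadd_subset_gaugeBall_of_inter_vadd_nonempty (hK : IsGaugeBody C K)
    (hC : 0 ≤ C) (hL : 0 ≤ L) (hle : ∀ x, gauge K x ≤ L * gauge Q x) {w x : E}
    (hne : (gaugeBall K x δ ∩ (w +ᵥ Q)).Nonempty) :
    w +ᵥ Q ⊆ gaugeBall K x (L + C * L + δ) := by
  obtain ⟨y, hyx, hyw⟩ := hne
  have hgauge {z : E} (hz : z ∈ w +ᵥ Q) : gauge K (z - w) ≤ L :=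
    (hle _).trans (mul_le_of_le_one_right hL (gauge_sub_le_one_of_mem_vadd hz))
  intro z hzw
  calc gauge K (z - x) ≤ gauge K (z - w) + (gauge K (w - y) + gauge K (y - x)) :=
        (hK.gauge_sub_le_add z w x).trans (by gcongr; exact hK.gauge_sub_le_add w y x)
    _ ≤ gauge K (z - w) + (C * gauge K (y - w) + gauge K (y - x)) := by
        gcongr; exact hK.gauge_sub_comm_le w y
    _ ≤ L + (C * L + gauge K (y - x)) := by
        gcongr
        exacts [hgauge hzw, hgauge hyw]
    _ < L + C * L + δ := by linarith [mem_gaugeBall.1 hyx]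

variable [FiniteDimensional ℝ E] [MeasurableSpace E] [BorelSpace E]

/- Otherwise, averaging over the positions of a small ball, `A` would have density at most `t` in
the slightly enlarged set `gaugeBall Q w (1 + (1 + C) * δ)`. -/
theorem IsGaugeBody.exists_lt_measure_inter_gaugeBall {C' : ℝ} (hK : IsGaugeBody C K) (hC : 0 < C)
    (hQ : IsGaugeBody C' Q) (hKQ : K ⊆ Q) {μ : Measure E} [SFinite μ] (hδ : 0 < δ) {θ : ℝ≥0}
    (hθ : HasDilationBound μ Q (1 + (1 + C) * δ) θ) {t : ℝ≥0∞} (ht : t ≠ ∞) {A : Set E} {w : E}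
    (hA : t * θ * μ (w +ᵥ Q) < μ (A ∩ (w +ᵥ Q))) :
    ∃ x, (gaugeBall K x δ ∩ (w +ᵥ Q)).Nonempty ∧
      t * μ (gaugeBall K x δ) < μ (A ∩ gaugeBall K x δ) := by
  by_contra! hcon
  refine hA.not_ge ?_
  calc μ (A ∩ (w +ᵥ Q)) ≤ t * μ (gaugeBall Q w (1 + (1 + C) * δ)) := by
        refine hK.measure_le_mul_of_forall_inter_gaugeBall_le ht hδ w le_rfl ?_
        rintro x ⟨y, ⟨-, hyw⟩, hyx⟩
        have hne : (gaugeBall K x δ ∩ (w +ᵥ Q)).Nonempty := ⟨y, hyx, hyw⟩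
        rw [one_smul, add_sub_cancel, inter_eq_right.2 <|
          hK.gaugeBall_subset_gaugeBall_of_inter_vadd_nonempty hC hQ.convex hKQ hne]
        exact (measure_mono (inter_subset_inter_left _ inter_subset_left)).trans (hcon x hne)
    _ ≤ t * (θ * μ (gaugeBall Q w 1)) := by
        gcongr
        simpa using hθ w 1 one_pos
    _ ≤ t * θ * μ (w +ᵥ Q) := by
        rw [mul_assoc]
        gcongr
        exact hQ.gaugeBall_one_subset_vadd w

end Density

section Halo

theorem setLIntegral_ofReal_abs_indicator_one {X : Type*} [MeasurableSpace X] (μ : Measure X)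
    {A : Set X} (hA : MeasurableSet A) (B : Set X) :
    ∫⁻ y in B, ENNReal.ofReal |A.indicator (1 : X → ℝ) y| ∂μ = μ (A ∩ B) := by
  have hind : (fun y ↦ ENNReal.ofReal |A.indicator (1 : X → ℝ) y|) = A.indicator 1 := by
    ext y
    by_cases hy : y ∈ A <;> simp [hy]
  rw [hind, lintegral_indicator_one hA, Measure.restrict_apply hA]

variable {n : ℕ} {μ ν : Measure (EuclideanSpace ℝ (Fin n))}
  {𝔅 : Set (Set (EuclideanSpace ℝ (Fin n)))} {t : ℝ≥0∞} {A : Set (EuclideanSpace ℝ (Fin n))}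

theorem lt_maxOp_indicator_one_iff (hA : MeasurableSet A) {x : EuclideanSpace ℝ (Fin n)} :
    t < maxOp μ 𝔅 (A.indicator 1) x ↔
      ∃ B ∈ 𝔅, x ∈ B ∧ 0 < μ B ∧ t < μ (A ∩ B) / μ B := by
  simp only [maxOp, lt_iSup_iff, setLIntegral_ofReal_abs_indicator_one μ hA, exists_prop]

/-- The set `A` together with the points at which the maximal function of its indicator exceeds the
level `t`. Adjoining `A` makes the iterates of `halo μ 𝔅 t` increasing. -/
def halo (μ : Measure (EuclideanSpace ℝ (Fin n))) (𝔅 : Set (Set (EuclideanSpace ℝ (Fin n))))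
    (t : ℝ≥0∞) (A : Set (EuclideanSpace ℝ (Fin n))) : Set (EuclideanSpace ℝ (Fin n)) :=
  A ∪ {x | t < maxOp μ 𝔅 (A.indicator 1) x}

theorem subset_halo {B : Set (EuclideanSpace ℝ (Fin n))} (hA : MeasurableSet A) (hB : B ∈ 𝔅)
    (hμB : μ B ≠ ∞) (h : t * μ B < μ (A ∩ B)) : B ⊆ halo μ 𝔅 t A := by
  have hpos : 0 < μ B := (zero_le.trans_lt h).trans_le (measure_mono inter_subset_right)
  exact fun x hx ↦ .inr <| (lt_maxOp_indicator_one_iff hA).2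
    ⟨B, hB, hx, hpos, (ENNReal.lt_div_iff_mul_lt (.inl hpos.ne') (.inl hμB)).2 h⟩

theorem measurableSet_halo (h𝔅 : ∀ B ∈ 𝔅, IsOpen B) (hA : MeasurableSet A) :
    MeasurableSet (halo μ 𝔅 t A) := by
  refine hA.union (IsOpen.measurableSet (isOpen_iff_mem_nhds.2 fun x hx ↦ ?_))
  obtain ⟨B, hB, hxB, h⟩ := (lt_maxOp_indicator_one_iff hA).1 hx
  filter_upwards [(h𝔅 B hB).mem_nhds hxB] with y hy
  exact (lt_maxOp_indicator_one_iff hA).2 ⟨B, hB, hy, h⟩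

theorem measurableSet_iterate_halo (h𝔅 : ∀ B ∈ 𝔅, IsOpen B) (hA : MeasurableSet A) (N : ℕ) :
    MeasurableSet ((halo μ 𝔅 t)^[N] A) :=
  Function.Iterate.rec MeasurableSet hA (fun _ ↦ measurableSet_halo h𝔅) N

theorem TauberianCond.measure_iterate_halo_le {γ c : ℝ} (h : TauberianCond μ ν 𝔅 γ c)
    (h𝔅 : ∀ B ∈ 𝔅, IsOpen B) (hA : MeasurableSet A) (N : ℕ) :
    ν ((halo μ 𝔅 (ENNReal.ofReal γ))^[N] A) ≤ (1 + ENNReal.ofReal c) ^ N * ν A := by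
  induction N with
  | zero => simp
  | succ N ih =>
    rw [Function.iterate_succ_apply']
    set H := (halo μ 𝔅 (ENNReal.ofReal γ))^[N] A
    calc ν (halo μ 𝔅 (ENNReal.ofReal γ) H) ≤ ν H + ENNReal.ofReal c * ν H :=
          (measure_union_le _ _).trans (by gcongr; exact h H (measurableSet_iterate_halo h𝔅 hA N))
      _ = (1 + ENNReal.ofReal c) * ν H := by ring
      _ ≤ (1 + ENNReal.ofReal c) * ((1 + ENNReal.ofReal c) ^ N * ν A) := by gcongr
      _ = (1 + ENNReal.ofReal c) ^ (N + 1) * ν A := by rw [pow_succ', mul_assoc]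

/- Each ball already covered has density at least `θ⁻¹ > t` in its enlargement by `1 + ε`. -/
theorem gaugeBall_subset_iterate_halo [IsLocallyFiniteMeasure μ] (h𝔅 : ∀ B ∈ 𝔅, IsOpen B)
    {C : ℝ} {K : Set (EuclideanSpace ℝ (Fin n))} (hK : IsGaugeBody C K)
    (hmem : ∀ x, ∀ r > 0, gaugeBall K x r ∈ 𝔅) {ε : ℝ} (hε : 0 < ε) {θ : ℝ≥0}
    (hθ : HasDilationBound μ K (1 + ε) θ) (htθ : t * θ < 1) (hA : MeasurableSet A)
    {x : EuclideanSpace ℝ (Fin n)} {δ : ℝ} (hδ : 0 < δ)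
    (h : t * μ (gaugeBall K x δ) < μ (A ∩ gaugeBall K x δ)) (j : ℕ) :
    gaugeBall K x ((1 + ε) ^ j * δ) ⊆ (halo μ 𝔅 t)^[j + 1] A := by
  induction j with
  | zero =>
    simpa using subset_halo hA (hmem x δ hδ) (hK.measure_gaugeBall_ne_top μ x hδ) h
  | succ j ih =>
    set r := (1 + ε) ^ j * δ with hr
    have hδr : δ ≤ r := le_mul_of_one_le_left hδ.le (one_le_pow₀ (by linarith))
    have hr0 : 0 < r := hδ.trans_le hδr
    have hpos : 0 < μ (gaugeBall K x r) := (zero_le.trans_lt h).trans_le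
      (measure_mono (inter_subset_right.trans (gaugeBall_mono hδr x)))
    rw [pow_succ', mul_assoc, ← hr, Function.iterate_succ_apply']
    refine subset_halo (measurableSet_iterate_halo h𝔅 hA _) (hmem x _ (by positivity))
      (hK.measure_gaugeBall_ne_top μ x (by positivity)) ?_
    calc t * μ (gaugeBall K x ((1 + ε) * r)) ≤ t * (θ * μ (gaugeBall K x r)) := by
          gcongr; exact hθ x r hr0
      _ = t * θ * μ (gaugeBall K x r) := (mul_assoc _ _ _).symm
      _ < 1 * μ (gaugeBall K x r) :=
          ENNReal.mul_lt_mul_left hpos.ne' (hK.measure_gaugeBall_ne_top μ x hr0) htθ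
      _ ≤ μ ((halo μ 𝔅 t)^[j + 1] A ∩ gaugeBall K x ((1 + ε) * r)) := by
          rw [one_mul]
          exact measure_mono (subset_inter ih (gaugeBall_mono (by nlinarith) x))

theorem vadd_subset_iterate_halo [IsLocallyFiniteMeasure μ] (h𝔅 : ∀ B ∈ 𝔅, IsOpen B)
    {C C' L : ℝ} {K Q : Set (EuclideanSpace ℝ (Fin n))} (hK : IsGaugeBody C K) (hC : 0 < C)
    (hmem : ∀ x, ∀ r > 0, gaugeBall K x r ∈ 𝔅) (hQ : IsGaugeBody C' Q) (hKQ : K ⊆ Q) (hL : 0 ≤ L)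
    (hle : ∀ x, gauge K x ≤ L * gauge Q x) {ε δ : ℝ} (hε : 0 < ε) (hδ : 0 < δ) {θ : ℝ≥0}
    (hθK : HasDilationBound μ K (1 + ε) θ) (hθQ : HasDilationBound μ Q (1 + (1 + C) * δ) θ)
    {N : ℕ} (hN : L + C * L + δ ≤ (1 + ε) ^ N * δ) (ht : t ≠ ∞) (htθ : t * θ < 1)
    (hA : MeasurableSet A) {w : EuclideanSpace ℝ (Fin n)}
    (hw : t * θ * μ (w +ᵥ Q) < μ (A ∩ (w +ᵥ Q))) :
    w +ᵥ Q ⊆ (halo μ 𝔅 t)^[N + 1] A := by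
  obtain ⟨x, hne, hx⟩ := hK.exists_lt_measure_inter_gaugeBall hC hQ hKQ hδ hθQ ht hw
  calc w +ᵥ Q ⊆ gaugeBall K x (L + C * L + δ) :=
        hK.vadd_subset_gaugeBall_of_inter_vadd_nonempty hC.le hL hle hne
    _ ⊆ gaugeBall K x ((1 + ε) ^ N * δ) := gaugeBall_mono hN x
    _ ⊆ (halo μ 𝔅 t)^[N + 1] A :=
        gaugeBall_subset_iterate_halo h𝔅 hK hmem hε hθK htθ hA hδ hx N

end Halo

section ConvexBasis

open Module (finrank)

variable {n : ℕ} {μ : Measure (EuclideanSpace ℝ (Fin n))}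
  {𝔅 𝔊 : Set (Set (EuclideanSpace ℝ (Fin n)))}

theorem HomothecyInvariant.gaugeBall_neg_vadd_mem (h : HomothecyInvariant 𝔅)
    {B : Set (EuclideanSpace ℝ (Fin n))} (hB : B ∈ 𝔅) (hconv : Convex ℝ B) (hopen : IsOpen B)
    {p : EuclideanSpace ℝ (Fin n)} (hp : p ∈ B) (x : EuclideanSpace ℝ (Fin n)) {r : ℝ}
    (hr : 0 < r) : gaugeBall (-p +ᵥ B) x r ∈ 𝔅 := by
  rw [← vadd_smul_eq_gaugeBall (hconv.vadd (-p)) (hopen.vadd (-p)) ⟨p, hp, by simp⟩ x hr]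
  exact (h _ ((h _ ((h B hB).1 (-p))).2 r hr)).1 x

theorem DoublingWrt.hasDilationBound {Δ : ℝ} (h : DoublingWrt μ 𝔅 Δ)
    {K : Set (EuclideanSpace ℝ (Fin n))} (hmem : ∀ x, ∀ r > 0, gaugeBall K x r ∈ 𝔅) :
    HasDilationBound μ K 2 Δ.toNNReal := by
  intro x r hr
  have hdilate : -x +ᵥ (2 : ℝ) • gaugeBall K x r = gaugeBall K x (2 * r) := by
    rw [vadd_smul_gaugeBall K x (-x) r two_pos]
    congr 1
    module
  rw [← hdilate]
  refine h _ (hmem x r hr) (-x) ?_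
  rw [hdilate]
  exact gaugeBall_mono (by linarith) x

theorem exists_subset_iterate_halo [IsLocallyFiniteMeasure μ]
    (hB : ∀ B ∈ 𝔅, IsConvexBasisSet B) (hhom : HomothecyInvariant 𝔅) {c : ℝ} (hc : 0 ≤ c)
    (h𝔊 : ∀ R ∈ 𝔊, Convex ℝ R ∧ ∃ B ∈ 𝔅, B ⊆ R ∧ ∃ z ∈ B, R ⊆ (fun x ↦ z + c • (x - z)) '' B)
    {Δ : ℝ} (hdbl : DoublingWrt μ 𝔅 Δ) {t : ℝ≥0∞} (ht : t ≠ ∞) {θ : ℝ≥0} (hθ : 1 < θ)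
    (htθ : t * θ < 1) :
    ∃ N : ℕ, ∀ A, MeasurableSet A → ∀ R ∈ 𝔊, t * θ * μ R < μ (A ∩ R) →
      R ⊆ (halo μ 𝔅 t)^[N] A := by
  set C : ℝ := finrank ℝ (EuclideanSpace ℝ (Fin n)) + 1
  have hC : 1 ≤ C := le_add_of_nonneg_left (Nat.cast_nonneg _)
  obtain ⟨L, hL, hLc⟩ : ∃ L, 1 ≤ L ∧ L = 1 + c * (1 + C) :=
    ⟨_, le_add_of_nonneg_right (by positivity), rfl⟩
  obtain ⟨m, hm⟩ := pow_unbounded_of_one_lt (2 * L) (one_lt_two (α := ℝ))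
  obtain ⟨ε, hε, hdilK⟩ := exists_hasDilationBound_one_add
    (E := EuclideanSpace ℝ (Fin n)) hC Δ.toNNReal hθ
  obtain ⟨ε', hε', hdilQ⟩ := exists_hasDilationBound_one_add
    (E := EuclideanSpace ℝ (Fin n)) (one_le_mul_of_one_le_of_one_le hC hL) (Δ.toNNReal ^ m) hθ
  obtain ⟨δ, hδ, rfl⟩ : ∃ δ > 0, (1 + C) * δ = ε' :=
    ⟨ε' / (1 + C), by positivity, by field_simp⟩
  obtain ⟨N, hN⟩ := pow_unbounded_of_one_lt ((L + C * L + δ) / δ) (by linarith : 1 < 1 + ε)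
  refine ⟨N + 1, fun A hA R hR hAR ↦ ?_⟩
  obtain ⟨hRconv, B, hB𝔅, hBR, z, hz, hRB⟩ := h𝔊 R hR
  obtain ⟨-, hbdd, hopen, hconv⟩ := hB B hB𝔅
  obtain ⟨p, hp, hK, hle⟩ :=
    exists_mem_isGaugeBody_neg_vadd_of_subset_homothety hconv hopen hbdd hc hBR hz hRB
  have hmem (x) (r : ℝ) (hr : r > 0) : gaugeBall (-p +ᵥ B) x r ∈ 𝔅 :=
    hhom.gaugeBall_neg_vadd_mem hB𝔅 hconv hopen hp x hr
  have hKQ : -p +ᵥ B ⊆ -p +ᵥ R := vadd_set_mono hBR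
  have hQ := hK.of_subset_of_gauge_le (by positivity) (hRconv.vadd (-p)) hKQ (by positivity) hle
  have hdbl' := hdbl.hasDilationBound hmem
  rw [← hLc] at hle hQ
  have hpR : p +ᵥ -p +ᵥ R = R := vadd_neg_vadd p R
  rw [← hpR] at hAR ⊢
  exact vadd_subset_iterate_halo (fun B hB𝔅 ↦ (hB B hB𝔅).2.2.1) hK (by positivity) hmem hQ hKQ
    (by positivity) hle hε hδ (hdilK μ _ hK hdbl')
    (hdilQ μ _ hQ (hdbl'.of_gauge_le hK.absorbent hKQ (by positivity) hle hm.le))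
    ((div_lt_iff₀ hδ).1 hN).le ht htθ hA hAR

end ConvexBasis

section Rectangles

variable {n : ℕ} {R : Set (EuclideanSpace ℝ (Fin n))}

theorem IsAxisRect.convex (h : IsAxisRect R) : Convex ℝ R := by
  obtain ⟨a, b, -, rfl⟩ := h
  have hpi := (convex_pi (s := univ) fun i _ ↦ convex_Ioo (a i) (b i)).linear_preimage
    (EuclideanSpace.equiv (Fin n) ℝ).toLinearMap
  simpa [Set.pi, preimage] using hpi

theorem IsRect.convex (h : IsRect R) : Convex ℝ R := by
  obtain ⟨f, S, hS, rfl⟩ := h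
  have himage := hS.convex.affine_image f.toRealAffineIsometryEquiv.toAffineEquiv.toAffineMap
  simpa using himage

end Rectangles

theorem statement17_general {n : ℕ} {𝔅 𝔊 : Set (Set (EuclideanSpace ℝ (Fin n)))}
    (hB : ∀ B ∈ 𝔅, IsConvexBasisSet B) (hhom : HomothecyInvariant 𝔅) {c : ℝ} (hc : 0 ≤ c)
    (h𝔊 : ∀ R ∈ 𝔊, Convex ℝ R ∧ ∃ B ∈ 𝔅, B ⊆ R ∧ ∃ z ∈ B, R ⊆ (fun x ↦ z + c • (x - z)) '' B)
    {μ ν : Measure (EuclideanSpace ℝ (Fin n))} [IsLocallyFiniteMeasure μ]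
    (hdbl : ∃ Δ, DoublingWrt μ 𝔅 Δ) {γ : ℝ} (hγ : 0 < γ)
    (htaub : ∃ c, 0 < c ∧ TauberianCond μ ν 𝔅 γ c) :
    ∀ α ∈ Ioo γ 1, ∃ c', 0 < c' ∧ TauberianCond μ ν 𝔊 α c' := by
  rintro α ⟨hγα, hα⟩
  obtain ⟨Δ, hdbl⟩ := hdbl
  obtain ⟨c₀, hc₀, htaub⟩ := htaub
  have hθ : 1 < (α / γ).toNNReal := by rwa [Real.one_lt_toNNReal, one_lt_div hγ]
  have hγθ : ENNReal.ofReal γ * (α / γ).toNNReal = ENNReal.ofReal α := by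
    rw [← ENNReal.ofReal, ← ENNReal.ofReal_mul hγ.le, mul_div_cancel₀ _ hγ.ne']
  obtain ⟨N, hN⟩ := exists_subset_iterate_halo hB hhom hc h𝔊 hdbl ENNReal.ofReal_ne_top hθ
    (hγθ.trans_lt (ENNReal.ofReal_lt_one.2 hα))
  refine ⟨(1 + c₀) ^ N, by positivity, fun A hA ↦ ?_⟩
  have hsub : {x | ENNReal.ofReal α < maxOp μ 𝔊 (A.indicator 1) x} ⊆
      (halo μ 𝔅 (ENNReal.ofReal γ))^[N] A := by
    intro x hx
    obtain ⟨R, hR, hxR, -, hAR⟩ := (lt_maxOp_indicator_one_iff hA).1 hx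
    exact hN A hA R hR (hγθ ▸ ENNReal.mul_lt_of_lt_div hAR) hxR
  rw [ENNReal.ofReal_pow (by positivity), ENNReal.ofReal_add zero_le_one hc₀.le, ENNReal.ofReal_one]
  exact (measure_mono hsub).trans
    (htaub.measure_iterate_halo_le (fun B hB𝔅 ↦ (hB B hB𝔅).2.2.1) hA N)

/-- Lemma `l.taubassoc` of the paper. Under the associated-rectangle
setup, if `M_{𝔅,μ}` satisfies the Tauberian condition at some level `γ ∈ (0,1)` with
respect to `ν`, then for every `α ∈ (γ,1)` the operator `M_{𝔊,μ}` (over the associated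
rectangles `𝔊 = Rect '' 𝔅`) satisfies a Tauberian condition at level `α` with respect
to `ν`. -/
theorem statement17 (n : ℕ) (𝔅 : Set (Set (EuclideanSpace ℝ (Fin n))))
    (hB : ∀ B ∈ 𝔅, IsConvexBasisSet B) (hhom : HomothecyInvariant 𝔅)
    (Rect : Set (EuclideanSpace ℝ (Fin n)) → Set (EuclideanSpace ℝ (Fin n)))
    (hRect : ∀ B ∈ 𝔅, IsRect (Rect B) ∧ B ⊆ Rect B ∧
      ∃ z ∈ B, Rect B ⊆ (fun x => z + ((n : ℝ) ^ (3 / 2 : ℝ)) • (x - z)) '' B)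
    (hGhom : HomothecyInvariant (Rect '' 𝔅))
    (μ ν : Measure (EuclideanSpace ℝ (Fin n)))
    (hlocμ : IsLocallyFiniteMeasure μ) (hlocν : IsLocallyFiniteMeasure ν)
    (hμ : μ ≠ 0) (hdbl : ∃ Δ : ℝ, 1 < Δ ∧ DoublingWrt μ 𝔅 Δ)
    (γ : ℝ) (hγ : γ ∈ Set.Ioo (0 : ℝ) 1)
    (htaub : ∃ c : ℝ, 0 < c ∧ TauberianCond μ ν 𝔅 γ c) :
    ∀ α ∈ Set.Ioo γ 1, ∃ c' : ℝ, 0 < c' ∧ TauberianCond μ ν (Rect '' 𝔅) α c' :=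
  statement17_general hB hhom (Real.rpow_nonneg n.cast_nonneg _)
    (forall_mem_image.2 fun B hB𝔅 ↦
      ⟨(hRect B hB𝔅).1.convex, B, hB𝔅, (hRect B hB𝔅).2.1, (hRect B hB𝔅).2.2⟩)
    (hdbl.imp fun _ h ↦ h.2) hγ.1 htaub
end

section
/- Let 𝔅 be a homothecy invariant basis of nonempty bounded open convex subsets of ℝⁿ, let μ be a nonzero locally finite nonnegative Borel measure doubling with respect to 𝔅 with constant Δ_μ, and set ρ = Δ_μ^{−⌈(3/2)·log₂ n⌉}. Let B ∈ 𝔅 with associated rectangle R = R_B satisfying B ⊆ R ⊆ h(B) for a homothety h of ratio n^{3/2} centered at a point of B. For a positive integer m let ξ_m = 1 − 9·δ^{4+⌈log₂(34√n)⌉}·(log₂(2^m/√n))^{−1}, where δ is the doubling constant of μ with respect to the affine images of cubes adapted to R, and assume m is so large that ξ_m > ρ. Then for every positive integer N there exists a set B_N ⊆ R such that: (i) B_N is a finite union of pairwise disjoint homothetic copies of B; (ii) for each homothetic copy B_α in the union, its associated rectangle R_{B_α} belongs to the dyadic mesh D_R and satisfies R_{B_α}^{(s)} = R for some integer 0 ≤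 s ≤ Nm; and (iii) μ(B_N) ≥ ρ·(1 − Ψ^{N+1})/(1 − Ψ)·μ(R), where Ψ = ξ_m − ρ. -/
open MeasureTheory Set Filter
open scoped ENNReal Topology Pointwise

/-!
In the coordinates where `R` is the unit cube, `B` becomes a convex set `K` and `μ` becomes a
measure that is doubling on cubes. Moving away from `K` along a separating direction shows that each
of the shells `4 ^ j * ε ≤ dist(·, K) < 4 ^ (j + 1) * ε` carries a fixed fraction of the mass of the
`ε`-neighbourhood of `K` outside `K`; since these shells are disjoint, the neighbourhood has
relative mass `O(1 / log (1 / ε))`. With `ε = 2⁻ᵐ` this bounds by `1 - ξ` the proportion of the cube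
left over by `K` and the dyadic cells of generation `m` that do not meet `K`. Every copy of `K`
captures the proportion `ρ` of its own cell, so repeating the construction inside the cells avoiding
`K` improves a captured proportion `a` to `ρ + Ψ * a`, whose iterates are the partial geometric
sums.
-/

open scoped NNReal

/-- A Borel measure is doubling on balls with constant `δ`. For the sup norm on `Fin n → ℝ` the
balls are the axis-parallel cubes. -/
def IsBallDoubling {X : Type*} [PseudoMetricSpace X] [MeasurableSpace X]
    (ν : Measure X) (δ : ℝ≥0) : Prop :=
  ∀ y r, 0 < r → ν (Metric.ball y (2 * r)) ≤ δ * ν (Metric.ball y r)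

theorem IsBallDoubling.measure_le_sq_mul_of_forall_exists_ball_subset
    {X : Type*} [PseudoMetricSpace X] [SecondCountableTopology X] [MeasurableSpace X]
    [OpensMeasurableSpace X] {ν : Measure X} {δ : ℝ≥0} (hν : IsBallDoubling ν δ)
    {E S : Set X} {r : ℝ} (hr : 0 < r)
    (hES : ∀ x ∈ E, ∃ y, dist x y ≤ 2 * r ∧ Metric.ball y r ⊆ S) :
    ν E ≤ δ ^ 2 * ν S := by
  choose! y hxy hyS using hES
  obtain ⟨u, huE, hdisj, hcover⟩ := Vitali.exists_disjoint_subfamily_covering_enlargement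
    (fun x => Metric.ball (y x) r) E (fun _ => (1 : ℝ)) 2 one_lt_two
    (fun _ _ => zero_le_one) 1 (fun _ _ => le_rfl) (fun x _ => ⟨y x, Metric.mem_ball_self hr⟩)
  have hcount : u.Countable := hdisj.countable_of_isOpen
    (fun _ _ => Metric.isOpen_ball) fun x _ => ⟨y x, Metric.mem_ball_self hr⟩
  have hsub : E ⊆ ⋃ x ∈ u, Metric.ball (y x) (2 * (2 * r)) := fun x hx => by
    obtain ⟨b, hb, hmeet, -⟩ := hcover x hx
    have hyy : dist (y x) (y b) < r + r := Metric.dist_lt_add_of_nonempty_ball_inter_ball hmeet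
    have := dist_triangle x (y x) (y b)
    have := hxy x hx
    exact mem_biUnion hb (Metric.mem_ball.2 (by linarith))
  have hball (z : X) : ν (Metric.ball z (2 * (2 * r))) ≤ δ ^ 2 * ν (Metric.ball z r) :=
    calc ν (Metric.ball z (2 * (2 * r))) ≤ δ * ν (Metric.ball z (2 * r)) := hν _ _ (by positivity)
      _ ≤ δ * (δ * ν (Metric.ball z r)) := by gcongr; exact hν _ _ hr
      _ = δ ^ 2 * ν (Metric.ball z r) := by ring
  calc ν E ≤ ∑' x : u, ν (Metric.ball (y x) (2 * (2 * r))) :=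
        (measure_mono hsub).trans (measure_biUnion_le ν hcount _)
    _ ≤ ∑' x : u, δ ^ 2 * ν (Metric.ball (y x) r) := ENNReal.tsum_le_tsum fun x => hball (y x)
    _ = δ ^ 2 * ν (⋃ x ∈ u, Metric.ball (y x) r) := by
        rw [ENNReal.tsum_mul_left,
          measure_biUnion hcount hdisj fun _ _ => Metric.isOpen_ball.measurableSet]
    _ ≤ δ ^ 2 * ν S := by gcongr; exact iUnion₂_subset fun x hx => hyS x (huE hx)

section FiniteDimensional

variable {E : Type*} [NormedAddCommGroup E] [NormedSpace ℝ E] [FiniteDimensional ℝ E]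

theorem exists_norm_le_one_apply_eq_norm (f : StrongDual ℝ E) : ∃ v : E, ‖v‖ ≤ 1 ∧ f v = ‖f‖ := by
  obtain ⟨v, hv, hmax⟩ := (isCompact_closedBall (0 : E) 1).exists_isMaxOn
    ⟨0, Metric.mem_closedBall_self zero_le_one⟩ f.continuous.continuousOn
  have hv1 : ‖v‖ ≤ 1 := mem_closedBall_zero_iff.1 hv
  refine ⟨v, hv1, le_antisymm ?_ ?_⟩
  · exact (le_abs_self _).trans (f.unit_le_opNorm v hv1)
  · have hle (z : E) (hz : ‖z‖ = 1) : f z ≤ f v := hmax (mem_closedBall_zero_iff.2 hz.le)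
    refine f.opNorm_le_of_unit_norm ?_ fun z hz => abs_le.2 ⟨?_, hle z hz⟩
    · simpa using hmax (Metric.mem_closedBall_self zero_le_one)
    · rw [neg_le, ← map_neg]
      exact hle (-z) (by rwa [norm_neg])

/-- A functional separating `x` from `K` attains its norm at a direction `v`, and moving along `v`
increases the distance to `K` at unit speed. -/
theorem exists_norm_le_one_forall_le_infDist_add_smul {K : Set E} (hKo : IsOpen K)
    (hKc : Convex ℝ K) (hKne : K.Nonempty) {x : E} (hx : x ∉ K) :
    ∃ v : E, ‖v‖ ≤ 1 ∧ ∀ r : ℝ, r ≤ Metric.infDist (x + r • v) K := by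
  obtain ⟨f, hf⟩ := geometric_hahn_banach_open_point hKc hKo hx
  obtain ⟨v, hv, hfv⟩ := exists_norm_le_one_apply_eq_norm f
  have hf0 : 0 < ‖f‖ := by
    obtain ⟨k, hk⟩ := hKne
    refine norm_pos_iff.2 fun h => ?_
    simpa [h] using hf k hk
  refine ⟨v, hv, fun r => (Metric.le_infDist hKne).2 fun k hk => ?_⟩
  rw [dist_eq_norm]
  refine le_of_mul_le_mul_left ?_ hf0
  calc ‖f‖ * r ≤ f (x + r • v - k) := by
        simp only [map_sub, map_add, map_smul, smul_eq_mul, hfv]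
        linarith [hf k hk]
    _ ≤ ‖f‖ * ‖x + r • v - k‖ := (le_abs_self _).trans (f.le_opNorm _)

variable [MeasurableSpace E] [BorelSpace E] {ν : Measure E} {δ : ℝ≥0}
  {K : Set E}

theorem IsBallDoubling.measure_near_convex_le_measure_shell (hν : IsBallDoubling ν δ)
    (hKo : IsOpen K) (hKc : Convex ℝ K) (hKne : K.Nonempty) {c : E} {R r : ℝ} (hr : 0 < r)
    (hrR : 4 * r ≤ R) :
    ν {x ∈ Metric.ball c R | x ∉ K ∧ Metric.infDist x K ≤ r} ≤
      δ ^ 2 * ν {z ∈ Metric.ball c (2 * R) | Metric.infDist z K ∈ Ico r (4 * r)} := by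
  refine hν.measure_le_sq_mul_of_forall_exists_ball_subset hr ?_
  rintro x ⟨hxc, hxK, hxr⟩
  obtain ⟨v, hv, hinf⟩ := exists_norm_le_one_forall_le_infDist_add_smul hKo hKc hKne hxK
  have hxy : dist x (x + (2 * r) • v) ≤ 2 * r := by
    rw [dist_self_add_right, norm_smul, Real.norm_of_nonneg (by positivity)]
    exact mul_le_of_le_one_right (by positivity) hv
  refine ⟨x + (2 * r) • v, hxy, fun z hz => ?_⟩
  rw [Metric.mem_ball] at hz hxc
  have hzx := dist_triangle_right z x (x + (2 * r) • v)
  have hzc := dist_triangle z x c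
  have hlower := (hinf (2 * r)).trans (Metric.infDist_le_infDist_add_dist (y := z))
  have hupper := Metric.infDist_le_infDist_add_dist (s := K) (x := z) (y := x)
  rw [dist_comm] at hlower
  exact ⟨Metric.mem_ball.2 (by linarith), by linarith, by linarith⟩

theorem pairwise_disjoint_preimage_Ico_four_pow_mul {X : Type*} (f : X → ℝ) {ε : ℝ} (hε : 0 < ε) :
    Pairwise (Function.onFun Disjoint fun j : ℕ => f ⁻¹' Ico (4 ^ j * ε) (4 ^ (j + 1) * ε)) := by
  have hmono : Monotone fun j : ℕ => 4 ^ j * ε := fun i j hij => by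
    dsimp only
    gcongr
    norm_num
  exact fun i j hij => (hmono.pairwise_disjoint_on_Ico_succ hij).preimage f

theorem IsBallDoubling.nat_mul_measure_near_convex_le (hν : IsBallDoubling ν δ) (hKo : IsOpen K)
    (hKc : Convex ℝ K) (hKne : K.Nonempty) {c : E} {R ε : ℝ} (hε : 0 < ε) {J : ℕ}
    (hJ : 4 ^ J * ε ≤ R) :
    J * ν {x ∈ Metric.ball c R | x ∉ K ∧ Metric.infDist x K ≤ ε} ≤
      δ ^ 3 * ν (Metric.ball c R) := by
  set near := {x ∈ Metric.ball c R | x ∉ K ∧ Metric.infDist x K ≤ ε}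
  let shell (j : ℕ) : Set E := Metric.ball c (2 * R) ∩
    (Metric.infDist · K) ⁻¹' Ico (4 ^ j * ε) (4 ^ (j + 1) * ε)
  have hnear (j : ℕ) (hj : j ∈ Finset.range J) : ν near ≤ δ ^ 2 * ν (shell j) := by
    have hε_le : ε ≤ 4 ^ j * ε := le_mul_of_one_le_left hε.le (one_le_pow₀ (by norm_num))
    have hstep : 4 * (4 ^ j * ε) = 4 ^ (j + 1) * ε := by ring
    have hR : 4 ^ (j + 1) * ε ≤ R := by
      refine le_trans ?_ hJ
      gcongr
      · norm_num
      · exact Finset.mem_range.1 hj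
    have hshell := hν.measure_near_convex_le_measure_shell hKo hKc hKne (c := c)
      (by positivity : 0 < 4 ^ j * ε) (hstep.trans_le hR)
    rw [hstep] at hshell
    refine (measure_mono ?_).trans hshell
    exact fun x hx => ⟨hx.1, hx.2.1, hx.2.2.trans hε_le⟩
  have hmeas (j : ℕ) : MeasurableSet (shell j) := Metric.isOpen_ball.measurableSet.inter
    ((Metric.continuous_infDist_pt K).measurable measurableSet_Ico)
  have hdisj : Pairwise (Function.onFun Disjoint shell) := fun i j hij =>
    (pairwise_disjoint_preimage_Ico_four_pow_mul _ hε hij).mono inter_subset_right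
      inter_subset_right
  have hR : 0 < R := lt_of_lt_of_le (by positivity) hJ
  calc (J : ℝ≥0∞) * ν near = ∑ _j ∈ Finset.range J, ν near := by simp
    _ ≤ ∑ j ∈ Finset.range J, δ ^ 2 * ν (shell j) := Finset.sum_le_sum hnear
    _ = δ ^ 2 * ν (⋃ j ∈ Finset.range J, shell j) := by
        rw [← Finset.mul_sum,
          measure_biUnion_finset (fun _ _ _ _ h => hdisj h) fun j _ => hmeas j]
    _ ≤ δ ^ 2 * ν (Metric.ball c (2 * R)) := by
        gcongr; exact iUnion₂_subset fun j _ => inter_subset_left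
    _ ≤ δ ^ 2 * (δ * ν (Metric.ball c R)) := by gcongr; exact hν c R hR
    _ = δ ^ 3 * ν (Metric.ball c R) := by ring

theorem IsBallDoubling.measure_frontier_eq_zero [IsFiniteMeasureOnCompacts ν]
    (hν : IsBallDoubling ν δ) (hKo : IsOpen K) (hKc : Convex ℝ K) : ν (frontier K) = 0 := by
  rcases K.eq_empty_or_nonempty with rfl | hKne
  · simp
  have hball (R : ℕ) : ν (Metric.ball 0 R ∩ frontier K) = 0 := by
    have hfin : δ ^ 3 * ν (Metric.ball 0 R) ≠ ⊤ :=
      ENNReal.mul_ne_top (by simp) measure_ball_lt_top.ne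
    have hbound (J : ℕ) : J * ν (Metric.ball 0 R ∩ frontier K) ≤ δ ^ 3 * ν (Metric.ball 0 R) := by
      rcases R.eq_zero_or_pos with rfl | hR
      · simp
      refine le_trans ?_ (hν.nat_mul_measure_near_convex_le hKo hKc hKne
        (ε := R / 4 ^ J) (J := J) (by positivity) (by field_simp; rfl))
      gcongr
      rintro x ⟨hxR, hx⟩
      rw [hKo.frontier_eq] at hx
      refine ⟨hxR, hx.2, ?_⟩
      rw [(Metric.mem_closure_iff_infDist_zero hKne).1 hx.1]
      positivity
    by_contra hne
    obtain ⟨J, hJ⟩ := ENNReal.exists_nat_mul_gt hne hfin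
    exact hJ.not_ge (hbound J)
  refine measure_mono_null (fun x hx => ?_) (measure_iUnion_null hball)
  obtain ⟨R, hR⟩ := exists_nat_gt (dist x 0)
  exact mem_iUnion.2 ⟨R, hR, hx⟩

end FiniteDimensional

section DyadicCells

variable {n : ℕ}

/-- The map `x ↦ 2 ^ s • x - j`, which carries the dyadic cell of generation `s` and position `j`
onto the unit cube. The scaled copy of `K` sitting in this cell is `dyadicZoom s j ⁻¹' K`. -/
noncomputable def dyadicZoom (s : ℕ) (j : Fin n → ℤ) : (Fin n → ℝ) ≃ₜ (Fin n → ℝ) :=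
  (Homeomorph.smulOfNeZero ((2 : ℝ) ^ s) (by positivity)).trans
    (Homeomorph.subRight fun i => (j i : ℝ))

theorem dyadicZoom_eq (s : ℕ) (j : Fin n → ℤ) (x : Fin n → ℝ) :
    dyadicZoom s j x = (2 : ℝ) ^ s • x - fun i => (j i : ℝ) := rfl

theorem dyadicZoom_apply (s : ℕ) (j : Fin n → ℤ) (x : Fin n → ℝ) (i : Fin n) :
    dyadicZoom s j x i = 2 ^ s * x i - j i := rfl

theorem dyadicZoom_zero_zero_preimage (S : Set (Fin n → ℝ)) : dyadicZoom 0 0 ⁻¹' S = S := by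
  have hid : (dyadicZoom 0 0 : (Fin n → ℝ) → Fin n → ℝ) = id := by
    ext x i
    simp [dyadicZoom_apply]
  rw [hid, preimage_id]

theorem dyadicZoom_dyadicZoom (s s' : ℕ) (j j' : Fin n → ℤ) (x : Fin n → ℝ) :
    dyadicZoom s' j' (dyadicZoom s j x) =
      dyadicZoom (s + s') (fun i => 2 ^ s' * j i + j' i) x := by
  ext i
  simp only [dyadicZoom_apply]
  push_cast
  ring

theorem dist_dyadicZoom (s : ℕ) (j : Fin n → ℤ) (x y : Fin n → ℝ) :
    dist (dyadicZoom s j x) (dyadicZoom s j y) = 2 ^ s * dist x y := by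
  rw [dyadicZoom_eq, dyadicZoom_eq, dist_sub_right, dist_smul₀, Real.norm_of_nonneg (by positivity)]

theorem dyadicZoom_preimage_ball (s : ℕ) (j : Fin n → ℤ) (y : Fin n → ℝ) (r : ℝ) :
    dyadicZoom s j ⁻¹' Metric.ball y r =
      Metric.ball ((dyadicZoom s j).symm y) (((2 : ℝ) ^ s)⁻¹ * r) := by
  ext x
  rw [mem_preimage, Metric.mem_ball, Metric.mem_ball, lt_inv_mul_iff₀ (by positivity),
    ← dist_dyadicZoom s j, Homeomorph.apply_symm_apply]

theorem dyadicZoom_preimage_eq_vadd_smul (s : ℕ) (j : Fin n → ℤ) (S : Set (Fin n → ℝ)) :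
    dyadicZoom s j ⁻¹' S =
      (((2 : ℝ) ^ s)⁻¹ • fun i => (j i : ℝ)) +ᵥ ((2 : ℝ) ^ s)⁻¹ • S := by
  have h2 : ((2 : ℝ) ^ s)⁻¹ ≠ 0 := by positivity
  ext x
  rw [mem_preimage, mem_vadd_set_iff_neg_vadd_mem, mem_smul_set_iff_inv_smul_mem₀ h2, inv_inv,
    vadd_eq_add, smul_add, smul_neg, smul_inv_smul₀ (by positivity), neg_add_eq_sub, dyadicZoom_eq]

theorem stdBox_zero_zero_eq_ball : stdBox n 0 0 = Metric.ball (fun _ => 1 / 2) (1 / 2) := by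
  ext x
  rw [Metric.mem_ball, dist_pi_lt_iff (by norm_num)]
  refine forall_congr' fun i => ?_
  rw [Real.dist_eq, abs_lt]
  simp only [Pi.zero_apply, Int.cast_zero, zero_add, zpow_zero, mul_one]
  constructor <;> rintro ⟨h₀, h₁⟩ <;> constructor <;> linarith

theorem mem_stdBox_zero_zero {x : Fin n → ℝ} : x ∈ stdBox n 0 0 ↔ ∀ i, 0 < x i ∧ x i < 1 := by
  simp [stdBox]

theorem dyadicZoom_preimage_stdBox (s : ℕ) (j : Fin n → ℤ) :
    dyadicZoom s j ⁻¹' stdBox n 0 0 = stdBox n (-s) j := by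
  ext x
  rw [mem_preimage, mem_stdBox_zero_zero]
  refine forall_congr' fun i => ?_
  rw [dyadicZoom_apply, zpow_neg, zpow_natCast, ← div_eq_mul_inv, ← div_eq_mul_inv,
    div_lt_iff₀' (by positivity), lt_div_iff₀' (by positivity), sub_pos, sub_lt_iff_lt_add']

theorem pairwise_disjoint_dyadicZoom_preimage_stdBox (s : ℕ) :
    Pairwise (Function.onFun Disjoint fun j : Fin n → ℤ => dyadicZoom s j ⁻¹' stdBox n 0 0) := by
  refine fun j j' hne => disjoint_left.2 fun x hx hx' => hne (funext fun i => ?_)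
  obtain ⟨h₀, h₁⟩ := mem_stdBox_zero_zero.1 hx i
  obtain ⟨h₀', h₁'⟩ := mem_stdBox_zero_zero.1 hx' i
  rw [dyadicZoom_apply] at h₀ h₁ h₀' h₁'
  have hlt : (j i : ℝ) < j' i + 1 := by linarith
  have hgt : (j' i : ℝ) < j i + 1 := by linarith
  norm_cast at hlt hgt
  omega

/-- The positions of the dyadic cells of generation `s` inside the unit cube. -/
noncomputable def dyadicPositions (n s : ℕ) : Finset (Fin n → ℤ) :=
  Fintype.piFinset fun _ => Finset.Ico 0 (2 ^ s)

theorem mem_dyadicPositions {s : ℕ} {j : Fin n → ℤ} :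
    j ∈ dyadicPositions n s ↔ ∀ i, 0 ≤ j i ∧ j i < 2 ^ s := by
  simp [dyadicPositions]

theorem mul_add_mem_dyadicPositions {s s' : ℕ} {j j' : Fin n → ℤ} (hj : j ∈ dyadicPositions n s)
    (hj' : j' ∈ dyadicPositions n s') :
    (fun i => 2 ^ s' * j i + j' i) ∈ dyadicPositions n (s + s') := by
  rw [mem_dyadicPositions] at hj hj' ⊢
  refine fun i => ⟨?_, ?_⟩
  · have := (hj i).1
    have := (hj' i).1
    positivity
  · calc 2 ^ s' * j i + j' i < 2 ^ s' * (j i + 1) := by linarith [(hj' i).2]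
      _ ≤ 2 ^ s' * 2 ^ s := by gcongr; exact (hj i).2
      _ = 2 ^ (s + s') := by ring

theorem dyadicZoom_preimage_stdBox_subset {s : ℕ} {j : Fin n → ℤ}
    (hj : j ∈ dyadicPositions n s) : dyadicZoom s j ⁻¹' stdBox n 0 0 ⊆ stdBox n 0 0 := by
  refine fun x hx => mem_stdBox_zero_zero.2 fun i => ?_
  obtain ⟨h₀, h₁⟩ := mem_stdBox_zero_zero.1 hx i
  obtain ⟨hj₀, hj₁⟩ := mem_dyadicPositions.1 hj i
  rw [dyadicZoom_apply] at h₀ h₁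
  have hj₀' : (0 : ℝ) ≤ j i := by exact_mod_cast hj₀
  have hj₁' : (j i : ℝ) + 1 ≤ 2 ^ s := by exact_mod_cast hj₁
  have h2 : (0 : ℝ) < 2 ^ s := by positivity
  constructor
  · exact pos_of_mul_pos_right (by linarith) h2.le
  · exact lt_of_mul_lt_mul_left (by linarith) h2.le

open scoped Classical in
/-- The positions of the dyadic cells of generation `m` in the unit cube that do not meet `K`. -/
noncomputable def avoidingPositions (K : Set (Fin n → ℝ)) (m : ℕ) : Finset (Fin n → ℤ) :=
  {j ∈ dyadicPositions n m | Disjoint (dyadicZoom m j ⁻¹' stdBox n 0 0) K}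

theorem mem_avoidingPositions {K : Set (Fin n → ℝ)} {m : ℕ} {j : Fin n → ℤ} :
    j ∈ avoidingPositions K m ↔
      j ∈ dyadicPositions n m ∧ Disjoint (dyadicZoom m j ⁻¹' stdBox n 0 0) K := by
  simp [avoidingPositions]

theorem exists_mem_dyadicPositions_mem_closure {x : Fin n → ℝ} (hx : x ∈ stdBox n 0 0) (m : ℕ) :
    ∃ j ∈ dyadicPositions n m, x ∈ closure (dyadicZoom m j ⁻¹' stdBox n 0 0) := by
  rw [mem_stdBox_zero_zero] at hx
  refine ⟨fun i => ⌊2 ^ m * x i⌋, mem_dyadicPositions.2 fun i => ⟨?_, ?_⟩, ?_⟩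
  · have := (hx i).1
    positivity
  · rw [Int.floor_lt]
    push_cast
    exact mul_lt_of_lt_one_right (by positivity) (hx i).2
  · rw [← Homeomorph.preimage_closure, stdBox_zero_zero_eq_ball, closure_ball _ (by norm_num),
      mem_preimage, Metric.mem_closedBall, dist_pi_le_iff (by norm_num)]
    intro i
    rw [dyadicZoom_apply, Real.dist_eq, abs_le]
    constructor <;> linarith [Int.floor_le (2 ^ m * x i), Int.lt_floor_add_one (2 ^ m * x i)]

theorem dist_le_of_mem_closure_dyadicZoom_preimage_stdBox {m : ℕ} {j : Fin n → ℤ}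
    {x y : Fin n → ℝ} (hx : x ∈ closure (dyadicZoom m j ⁻¹' stdBox n 0 0))
    (hy : y ∈ dyadicZoom m j ⁻¹' stdBox n 0 0) : dist x y ≤ (2 ^ m)⁻¹ := by
  rw [← Homeomorph.preimage_closure, stdBox_zero_zero_eq_ball, closure_ball _ (by norm_num)] at hx
  rw [stdBox_zero_zero_eq_ball] at hy
  rw [← one_div, le_div_iff₀' (by positivity), ← dist_dyadicZoom m j]
  refine (dist_triangle_right _ _ _).trans ((add_le_add hx (Metric.mem_ball.1 hy).le).trans ?_)
  norm_num

theorem stdBox_subset_union_avoiding_union_near (K : Set (Fin n → ℝ)) (m : ℕ) :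
    stdBox n 0 0 ⊆ (K ∪ ⋃ j ∈ avoidingPositions K m,
      closure (dyadicZoom m j ⁻¹' stdBox n 0 0)) ∪
        {x ∈ stdBox n 0 0 | x ∉ K ∧ Metric.infDist x K ≤ (2 ^ m)⁻¹} := by
  intro x hx
  by_cases hxK : x ∈ K
  · exact Or.inl (Or.inl hxK)
  obtain ⟨j, hj, hxj⟩ := exists_mem_dyadicPositions_mem_closure hx m
  by_cases hdisj : Disjoint (dyadicZoom m j ⁻¹' stdBox n 0 0) K
  · exact Or.inl (Or.inr (mem_biUnion (mem_avoidingPositions.2 ⟨hj, hdisj⟩) hxj))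
  · obtain ⟨y, hy, hyK⟩ := not_disjoint_iff.1 hdisj
    exact Or.inr ⟨hx, hxK, (Metric.infDist_le_dist_of_mem hyK).trans
      (dist_le_of_mem_closure_dyadicZoom_preimage_stdBox hxj hy)⟩

variable {ν : Measure (Fin n → ℝ)} {δ : ℝ≥0}

theorem IsBallDoubling.map_dyadicZoom (hν : IsBallDoubling ν δ) (s : ℕ) (j : Fin n → ℤ) :
    IsBallDoubling (ν.map (dyadicZoom s j)) δ := by
  intro y r hr
  have hz : MeasurableEmbedding (dyadicZoom s j) := (dyadicZoom s j).measurableEmbedding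
  rw [hz.map_apply, hz.map_apply, dyadicZoom_preimage_ball, dyadicZoom_preimage_ball,
    mul_left_comm]
  exact hν _ _ (by positivity)

theorem IsBallDoubling.measure_closure_dyadicZoom_preimage_stdBox [IsFiniteMeasureOnCompacts ν]
    (hν : IsBallDoubling ν δ) (s : ℕ) (j : Fin n → ℤ) :
    ν (closure (dyadicZoom s j ⁻¹' stdBox n 0 0)) = ν (dyadicZoom s j ⁻¹' stdBox n 0 0) := by
  rw [stdBox_zero_zero_eq_ball, dyadicZoom_preimage_ball]
  exact measure_closure_of_null_frontier
    (hν.measure_frontier_eq_zero Metric.isOpen_ball (convex_ball _ _))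

theorem IsBallDoubling.measure_near_le_mul_measure_stdBox (hν : IsBallDoubling ν δ)
    {K : Set (Fin n → ℝ)} (hKo : IsOpen K) (hKc : Convex ℝ K) (hKne : K.Nonempty) {m J : ℕ}
    {η : ℝ≥0} (hJ : J ≠ 0) (hJm : 2 * J + 1 ≤ m) (hη : δ ^ 3 ≤ J * η) :
    ν {x ∈ stdBox n 0 0 | x ∉ K ∧ Metric.infDist x K ≤ (2 ^ m)⁻¹} ≤ η * ν (stdBox n 0 0) := by
  have hscale : (4 : ℝ) ^ J * (2 ^ m)⁻¹ ≤ 1 / 2 := by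
    rw [← div_eq_mul_inv, div_le_div_iff₀ (by positivity) two_pos, one_mul]
    calc (4 : ℝ) ^ J * 2 = 2 ^ (2 * J + 1) := by rw [pow_succ, pow_mul]; norm_num
      _ ≤ 2 ^ m := pow_le_pow_right₀ one_le_two hJm
  have hnear := hν.nat_mul_measure_near_convex_le hKo hKc hKne (c := fun _ => 1 / 2)
    (by positivity) hscale
  rw [← stdBox_zero_zero_eq_ball] at hnear
  refine (ENNReal.mul_le_mul_iff_right (Nat.cast_ne_zero.2 hJ) (ENNReal.natCast_ne_top J)).1 ?_
  calc _ ≤ (δ : ℝ≥0∞) ^ 3 * ν (stdBox n 0 0) := hnear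
    _ ≤ (J * η) * ν (stdBox n 0 0) := by gcongr; exact_mod_cast hη
    _ = J * (η * ν (stdBox n 0 0)) := mul_assoc _ _ _

theorem IsBallDoubling.measure_stdBox_le [IsFiniteMeasureOnCompacts ν] (hν : IsBallDoubling ν δ)
    {K : Set (Fin n → ℝ)} (hKo : IsOpen K) (hKc : Convex ℝ K) (hKne : K.Nonempty) {m J : ℕ}
    {η : ℝ≥0} (hJ : J ≠ 0) (hJm : 2 * J + 1 ≤ m) (hη : δ ^ 3 ≤ J * η) :
    ν (stdBox n 0 0) ≤ ν K + ∑ j ∈ avoidingPositions K m, ν (dyadicZoom m j ⁻¹' stdBox n 0 0) +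
      η * ν (stdBox n 0 0) := by
  refine (measure_mono (stdBox_subset_union_avoiding_union_near K m)).trans
    ((measure_union_le _ _).trans (add_le_add ((measure_union_le _ _).trans ?_)
      (hν.measure_near_le_mul_measure_stdBox hKo hKc hKne hJ hJm hη)))
  gcongr
  refine (measure_biUnion_finset_le _ _).trans (Finset.sum_le_sum fun j _ => ?_)
  exact (hν.measure_closure_dyadicZoom_preimage_stdBox m j).le

end DyadicCells

section DyadicPackings

variable {n : ℕ} {K : Set (Fin n → ℝ)}

/-- A finite disjoint family of copies of `K`, each scaled into a dyadic cell of the unit cube of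
generation at most `M`. -/
structure IsDyadicPacking (K : Set (Fin n → ℝ)) (M : ℕ) (𝒞 : Set (Set (Fin n → ℝ))) : Prop where
  finite : 𝒞.Finite
  pairwiseDisjoint : 𝒞.PairwiseDisjoint id
  exists_eq_preimage : ∀ C ∈ 𝒞, ∃ s ≤ M, ∃ j ∈ dyadicPositions n s, C = dyadicZoom s j ⁻¹' K

theorem isDyadicPacking_singleton (K : Set (Fin n → ℝ)) : IsDyadicPacking K 0 {K} where
  finite := finite_singleton K
  pairwiseDisjoint := pairwiseDisjoint_singleton K id
  exists_eq_preimage := by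
    rintro C rfl
    exact ⟨0, le_rfl, 0, mem_dyadicPositions.2 fun i => by simp,
      (dyadicZoom_zero_zero_preimage C).symm⟩

theorem IsDyadicPacking.sUnion_subset {M : ℕ} {𝒞 : Set (Set (Fin n → ℝ))}
    (h𝒞 : IsDyadicPacking K M 𝒞) (hKQ : K ⊆ stdBox n 0 0) : ⋃₀ 𝒞 ⊆ stdBox n 0 0 := by
  refine Set.sUnion_subset fun C hC => ?_
  obtain ⟨s, -, j, hj, rfl⟩ := h𝒞.exists_eq_preimage C hC
  exact (preimage_mono hKQ).trans (dyadicZoom_preimage_stdBox_subset hj)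

theorem IsDyadicPacking.isOpen {M : ℕ} {𝒞 : Set (Set (Fin n → ℝ))} (h𝒞 : IsDyadicPacking K M 𝒞)
    (hK : IsOpen K) {C : Set (Fin n → ℝ)} (hC : C ∈ 𝒞) : IsOpen C := by
  obtain ⟨s, -, j, -, rfl⟩ := h𝒞.exists_eq_preimage C hC
  exact hK.preimage (dyadicZoom s j).continuous

/-- `K` together with the families `P j` scaled into the cells of generation `m` that avoid `K`. -/
def refinedFamily (K : Set (Fin n → ℝ)) (m : ℕ)
    (P : (Fin n → ℤ) → Set (Set (Fin n → ℝ))) : Set (Set (Fin n → ℝ)) :=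
  insert K (⋃ j ∈ avoidingPositions K m, (dyadicZoom m j ⁻¹' ·) '' P j)

theorem sUnion_refinedFamily (K : Set (Fin n → ℝ)) (m : ℕ)
    (P : (Fin n → ℤ) → Set (Set (Fin n → ℝ))) :
    ⋃₀ refinedFamily K m P = K ∪ ⋃ j ∈ avoidingPositions K m, dyadicZoom m j ⁻¹' ⋃₀ P j := by
  simp only [refinedFamily, sUnion_insert, sUnion_iUnion, sUnion_image, preimage_sUnion]

section Refinement

variable {m M : ℕ} {P : (Fin n → ℤ) → Set (Set (Fin n → ℝ))}

theorem disjoint_preimage_sUnion_of_mem_avoidingPositions (hKQ : K ⊆ stdBox n 0 0)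
    (hP : ∀ j, IsDyadicPacking K M (P j)) {j : Fin n → ℤ} (hj : j ∈ avoidingPositions K m) :
    Disjoint K (dyadicZoom m j ⁻¹' ⋃₀ P j) :=
  (mem_avoidingPositions.1 hj).2.symm.mono_right (preimage_mono ((hP j).sUnion_subset hKQ))

theorem pairwise_disjoint_preimage_sUnion (hKQ : K ⊆ stdBox n 0 0)
    (hP : ∀ j, IsDyadicPacking K M (P j)) :
    Pairwise (Function.onFun Disjoint fun j => dyadicZoom m j ⁻¹' ⋃₀ P j) := fun _ _ hne =>
  (pairwise_disjoint_dyadicZoom_preimage_stdBox m hne).mono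
    (preimage_mono ((hP _).sUnion_subset hKQ)) (preimage_mono ((hP _).sUnion_subset hKQ))

theorem pairwiseDisjoint_refinedFamily (hKQ : K ⊆ stdBox n 0 0)
    (hP : ∀ j, IsDyadicPacking K M (P j)) : (refinedFamily K m P).PairwiseDisjoint id := by
  have hsup (j : Fin n → ℤ) :
      ⨆ C ∈ (dyadicZoom m j ⁻¹' ·) '' P j, id C = dyadicZoom m j ⁻¹' ⋃₀ P j := by
    simp only [id, iSup_eq_iUnion, biUnion_image, preimage_sUnion]
  refine PairwiseDisjoint.insert (PairwiseDisjoint.biUnion (fun j _ j' _ hne => ?_) ?_) ?_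
  · simpa only [Function.onFun, hsup] using pairwise_disjoint_preimage_sUnion hKQ hP hne
  · rintro j - _ ⟨C, hC, rfl⟩ _ ⟨D, hD, rfl⟩ hne
    exact ((hP j).pairwiseDisjoint hC hD (ne_of_apply_ne _ hne)).preimage _
  · intro C hC _
    obtain ⟨j, hj, D, hD, rfl⟩ := mem_iUnion₂.1 hC
    exact (disjoint_preimage_sUnion_of_mem_avoidingPositions hKQ hP hj).mono_right
      (preimage_mono (subset_sUnion_of_mem hD))

theorem isDyadicPacking_refinedFamily (hKQ : K ⊆ stdBox n 0 0)
    (hP : ∀ j, IsDyadicPacking K M (P j)) : IsDyadicPacking K (m + M) (refinedFamily K m P) where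
  finite := ((avoidingPositions K m).finite_toSet.biUnion fun j _ =>
    (hP j).finite.image _).insert K
  pairwiseDisjoint := pairwiseDisjoint_refinedFamily hKQ hP
  exists_eq_preimage := by
    rintro C (rfl | hC)
    · obtain ⟨s, hs, j, hj, hC⟩ := (isDyadicPacking_singleton C).exists_eq_preimage C rfl
      exact ⟨s, hs.trans (Nat.zero_le _), j, hj, hC⟩
    · obtain ⟨j, hj, D, hD, rfl⟩ := mem_iUnion₂.1 hC
      obtain ⟨s, hs, j', hj', rfl⟩ := (hP j).exists_eq_preimage D hD
      refine ⟨m + s, by omega, _,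
        mul_add_mem_dyadicPositions (mem_avoidingPositions.1 hj).1 hj', ?_⟩
      ext x
      simp only [mem_preimage, dyadicZoom_dyadicZoom]

theorem measure_sUnion_refinedFamily (ν : Measure (Fin n → ℝ)) (hK : IsOpen K)
    (hKQ : K ⊆ stdBox n 0 0) (hP : ∀ j, IsDyadicPacking K M (P j)) :
    ν (⋃₀ refinedFamily K m P) =
      ν K + ∑ j ∈ avoidingPositions K m, ν (dyadicZoom m j ⁻¹' ⋃₀ P j) := by
  have hmeas (j : Fin n → ℤ) : MeasurableSet (dyadicZoom m j ⁻¹' ⋃₀ P j) :=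
    ((isOpen_sUnion fun _ => (hP j).isOpen hK).preimage (dyadicZoom m j).continuous).measurableSet
  rw [sUnion_refinedFamily, measure_union _ (Finset.measurableSet_biUnion _ fun j _ => hmeas j),
    measure_biUnion_finset _ fun j _ => hmeas j]
  · exact fun _ _ _ _ hne => pairwise_disjoint_preimage_sUnion hKQ hP hne
  · exact disjoint_iUnion₂_right.2 fun j => disjoint_preimage_sUnion_of_mem_avoidingPositions hKQ hP

end Refinement

theorem add_mul_mul_le_add_mul {q k g : ℝ≥0∞} {ρ Ψ η a : ℝ≥0} (hsum : ρ + Ψ + η = 1)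
    (ha : a ≤ 1) (hq : q ≠ ⊤) (hk : ρ * q ≤ k) (hqle : q ≤ k + g + η * q) :
    (ρ + Ψ * a) * q ≤ k + a * g := by
  obtain ⟨b, hab⟩ := exists_add_of_le ha
  have hfin : a * (η * q) ≠ ⊤ := by finiteness
  refine ENNReal.le_of_add_le_add_right hfin ?_
  have hcoef : ρ + Ψ * a + a * η = b * ρ + a := by
    calc ρ + Ψ * a + a * η = (a + b) * ρ + Ψ * a + a * η := by rw [← hab, one_mul]
      _ = b * ρ + a * (ρ + Ψ + η) := by ring
      _ = b * ρ + a := by rw [hsum, mul_one]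
  have hcoef' : (ρ + Ψ * a + a * η : ℝ≥0∞) = b * ρ + a := by exact_mod_cast hcoef
  have hab' : (1 : ℝ≥0∞) = a + b := by exact_mod_cast hab
  calc (ρ + Ψ * a) * q + a * (η * q) = (ρ + Ψ * a + a * η) * q := by ring
    _ = b * (ρ * q) + a * q := by rw [hcoef']; ring
    _ ≤ b * k + a * (k + g + η * q) := by gcongr
    _ = (a + b) * k + a * g + a * (η * q) := by ring
    _ = k + a * g + a * (η * q) := by rw [← hab', one_mul]

theorem mul_geom_sum_le_one {ρ Ψ : ℝ≥0} (h : ρ + Ψ ≤ 1) (N : ℕ) :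
    ρ * ∑ i ∈ Finset.range N, Ψ ^ i ≤ 1 := by
  induction N with
  | zero => simp
  | succ N ih =>
    calc ρ * ∑ i ∈ Finset.range (N + 1), Ψ ^ i
        = ρ + Ψ * (ρ * ∑ i ∈ Finset.range N, Ψ ^ i) := by rw [geom_sum_succ]; ring
      _ ≤ ρ + Ψ * 1 := by gcongr
      _ ≤ 1 := by rwa [mul_one]

/-- One step of the recursion `a ↦ ρ + Ψ * a` for the proportion of the measure captured. -/
theorem exists_isDyadicPacking_add_mul_le_measure (hKo : IsOpen K) (hKc : Convex ℝ K)
    (hKne : K.Nonempty) (hKQ : K ⊆ stdBox n 0 0) {m J M : ℕ} {δ ρ Ψ η a : ℝ≥0} (hJ : J ≠ 0)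
    (hJm : 2 * J + 1 ≤ m) (hη : δ ^ 3 ≤ J * η) (hsum : ρ + Ψ + η = 1) (ha : a ≤ 1)
    {ν : Measure (Fin n → ℝ)} [IsFiniteMeasureOnCompacts ν] (hν : IsBallDoubling ν δ)
    (hK : ρ * ν (stdBox n 0 0) ≤ ν K)
    (hcell : ∀ j, ∃ 𝒞, IsDyadicPacking K M 𝒞 ∧
      a * ν (dyadicZoom m j ⁻¹' stdBox n 0 0) ≤ ν (dyadicZoom m j ⁻¹' ⋃₀ 𝒞)) :
    ∃ 𝒞, IsDyadicPacking K (m + M) 𝒞 ∧ (ρ + Ψ * a) * ν (stdBox n 0 0) ≤ ν (⋃₀ 𝒞) := by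
  choose P hP hPle using hcell
  refine ⟨refinedFamily K m P, isDyadicPacking_refinedFamily hKQ hP, ?_⟩
  have hfin : ν (stdBox n 0 0) ≠ ⊤ := by
    rw [stdBox_zero_zero_eq_ball]
    exact measure_ball_lt_top.ne
  rw [measure_sUnion_refinedFamily ν hKo hKQ hP]
  refine (add_mul_mul_le_add_mul hsum ha hfin hK
    (hν.measure_stdBox_le hKo hKc hKne hJ hJm hη)).trans ?_
  rw [Finset.mul_sum]
  gcongr
  exact hPle _

theorem exists_isDyadicPacking_le_measure (hKo : IsOpen K) (hKc : Convex ℝ K) (hKne : K.Nonempty)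
    (hKQ : K ⊆ stdBox n 0 0) {m J : ℕ} {δ ρ Ψ η : ℝ≥0} (hJ : J ≠ 0) (hJm : 2 * J + 1 ≤ m)
    (hη : δ ^ 3 ≤ J * η) (hsum : ρ + Ψ + η = 1) (N : ℕ) :
    ∀ (ν : Measure (Fin n → ℝ)) [IsFiniteMeasureOnCompacts ν], IsBallDoubling ν δ →
      (∀ s j, ρ * ν (dyadicZoom s j ⁻¹' stdBox n 0 0) ≤ ν (dyadicZoom s j ⁻¹' K)) →
      ∃ 𝒞, IsDyadicPacking K (N * m) 𝒞 ∧
        ↑(ρ * ∑ i ∈ Finset.range (N + 1), Ψ ^ i) * ν (stdBox n 0 0) ≤ ν (⋃₀ 𝒞) := by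
  induction N with
  | zero =>
    intro ν _ _ hdens
    refine ⟨{K}, by simpa using isDyadicPacking_singleton K, ?_⟩
    simpa [dyadicZoom_zero_zero_preimage] using hdens 0 0
  | succ N ih =>
    intro ν _ hν hdens
    have hK : ρ * ν (stdBox n 0 0) ≤ ν K := by
      simpa only [dyadicZoom_zero_zero_preimage] using hdens 0 0
    have hρΨ : ρ + Ψ ≤ 1 := hsum ▸ le_self_add
    obtain ⟨𝒞, h𝒞, hle⟩ := exists_isDyadicPacking_add_mul_le_measure hKo hKc hKne hKQ hJ hJm hη
      hsum (mul_geom_sum_le_one hρΨ (N + 1)) hν hK fun j => by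
        have hmap (S : Set (Fin n → ℝ)) : ν.map (dyadicZoom m j) S = ν (dyadicZoom m j ⁻¹' S) :=
          (dyadicZoom m j).measurableEmbedding.map_apply ν S
        have : IsFiniteMeasureOnCompacts (ν.map (dyadicZoom m j)) :=
          Measure.IsFiniteMeasureOnCompacts.map ν _
        simpa only [hmap] using ih (ν.map (dyadicZoom m j)) (hν.map_dyadicZoom m j) fun s j' => by
          simpa only [hmap, ← preimage_comp, Function.comp_def, dyadicZoom_dyadicZoom]
            using hdens (m + s) fun i => 2 ^ s * j i + j' i
    refine ⟨𝒞, by rwa [Nat.succ_mul, add_comm], le_of_eq_of_le ?_ hle⟩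
    rw [geom_sum_succ]
    push_cast
    ring

end DyadicPackings

section AffineImages

variable {E F : Type*} [AddCommGroup E] [Module ℝ E] [AddCommGroup F] [Module ℝ F]

theorem image_vadd_smul_set (f : E →ᵃ[ℝ] F) (w : E) (t : ℝ) (S : Set E) :
    f '' (w +ᵥ t • S) = (f w - t • f 0) +ᵥ t • f '' S := by
  have happly (x : E) : f (w + t • x) = f w - t • f 0 + t • f x := by
    have hlin (u : E) : f u = f.linear u + f 0 := congrFun f.decomp u
    rw [hlin (w + t • x), hlin w, hlin x, map_add, map_smul]
    module
  simp only [← image_vadd, ← image_smul, image_image, vadd_eq_add, happly]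

theorem homothety_image_eq_vadd_smul_set (z : E) (c : ℝ) (S : Set E) :
    AffineMap.homothety z c '' S = (z - c • z) +ᵥ c • S := by
  have happly (x : E) : AffineMap.homothety z c x = z - c • z + c • x := by
    rw [AffineMap.homothety_apply, vsub_eq_sub, vadd_eq_add]
    module
  simp only [← image_vadd, ← image_smul, image_image, vadd_eq_add, happly]

theorem homothety_image_mono {S : Set E} (hS : Convex ℝ S) {z : E} (hz : z ∈ S) {c c' : ℝ}
    (hc : 0 ≤ c) (hcc' : c ≤ c') :
    AffineMap.homothety z c '' S ⊆ AffineMap.homothety z c' '' S := by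
  rintro _ ⟨x, hx, rfl⟩
  refine ⟨AffineMap.homothety z (c / c') x, ?_, ?_⟩
  · exact hS.lineMap_mem hz hx ⟨div_nonneg hc (hc.trans hcc'),
      div_le_one_of_le₀ hcc' (hc.trans hcc')⟩
  · rw [← AffineMap.homothety_mul_apply, mul_div_cancel_of_imp']
    rintro rfl
    exact le_antisymm hcc' hc

theorem vadd_smul_homothety_image (y z : E) (t c : ℝ) (S : Set E) :
    y +ᵥ t • AffineMap.homothety z c '' S =
      AffineMap.homothety (y + t • z) c '' (y +ᵥ t • S) := by
  have happly (x : E) : y + t • AffineMap.homothety z c x =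
      AffineMap.homothety (y + t • z) c (y + t • x) := by
    simp only [AffineMap.homothety_apply, vsub_eq_sub, vadd_eq_add]
    module
  simp only [← image_vadd, ← image_smul, image_image, vadd_eq_add, happly]

end AffineImages

section HomothecyBasis

variable {n : ℕ} {𝔅 : Set (Set (EuclideanSpace ℝ (Fin n)))}
  {μ : Measure (EuclideanSpace ℝ (Fin n))} {Δ : ℝ} {B R : Set (EuclideanSpace ℝ (Fin n))}
  {z : EuclideanSpace ℝ (Fin n)}

theorem HomothecyInvariant.vadd_smul_mem (h𝔅 : HomothecyInvariant 𝔅) (hB : B ∈ 𝔅)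
    (y : EuclideanSpace ℝ (Fin n)) {t : ℝ} (ht : 0 < t) : y +ᵥ t • B ∈ 𝔅 :=
  (h𝔅 _ ((h𝔅 B hB).2 t ht)).1 y

theorem DoublingWrt.measure_homothety_two_pow_le (hμ : DoublingWrt μ 𝔅 Δ)
    (h𝔅 : HomothecyInvariant 𝔅) (hB : B ∈ 𝔅) (hBc : Convex ℝ B) (hz : z ∈ B) (k : ℕ) :
    μ (AffineMap.homothety z ((2 : ℝ) ^ k) '' B) ≤ ENNReal.ofReal Δ ^ k * μ B := by
  induction k with
  | zero => simp
  | succ k ih =>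
    have hmem : AffineMap.homothety z ((2 : ℝ) ^ k) '' B ∈ 𝔅 := by
      rw [homothety_image_eq_vadd_smul_set]
      exact h𝔅.vadd_smul_mem hB _ (by positivity)
    have hdouble : AffineMap.homothety z ((2 : ℝ) ^ (k + 1)) '' B =
        (z - (2 : ℝ) • z) +ᵥ (2 : ℝ) • AffineMap.homothety z ((2 : ℝ) ^ k) '' B := by
      rw [← homothety_image_eq_vadd_smul_set, image_image, pow_succ']
      simp only [AffineMap.homothety_mul_apply]
    have hsub := homothety_image_mono hBc hz (by positivity)
      (pow_le_pow_right₀ one_le_two k.le_succ : (2 : ℝ) ^ k ≤ 2 ^ (k + 1))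
    rw [hdouble] at hsub ⊢
    calc _ ≤ ENNReal.ofReal Δ * μ (AffineMap.homothety z ((2 : ℝ) ^ k) '' B) := hμ _ hmem _ hsub
      _ ≤ ENNReal.ofReal Δ * (ENNReal.ofReal Δ ^ k * μ B) := by gcongr
      _ = ENNReal.ofReal Δ ^ (k + 1) * μ B := by rw [pow_succ', mul_assoc]

theorem DoublingWrt.measure_vadd_smul_le (hμ : DoublingWrt μ 𝔅 Δ) (h𝔅 : HomothecyInvariant 𝔅)
    (hB : B ∈ 𝔅) (hBc : Convex ℝ B) (hz : z ∈ B) {c : ℝ} (hc : 0 ≤ c) {k : ℕ} (hck : c ≤ 2 ^ k)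
    (hR : R ⊆ AffineMap.homothety z c '' B) (y : EuclideanSpace ℝ (Fin n)) {t : ℝ} (ht : 0 < t) :
    μ (y +ᵥ t • R) ≤ ENNReal.ofReal Δ ^ k * μ (y +ᵥ t • B) := by
  have hyz : y + t • z ∈ y +ᵥ t • B := vadd_mem_vadd_set (smul_mem_smul_set hz)
  refine (measure_mono ?_).trans (hμ.measure_homothety_two_pow_le h𝔅 (h𝔅.vadd_smul_mem hB y ht)
    ((hBc.smul t).vadd y) hyz k)
  rw [← vadd_smul_homothety_image]
  exact vadd_set_mono (smul_set_mono (hR.trans (homothety_image_mono hBc hz hc hck)))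

end HomothecyBasis

section Rectangles

variable {n : ℕ}

theorem IsRectParam.exists_affineEquiv {T : (Fin n → ℝ) → EuclideanSpace ℝ (Fin n)}
    (hT : IsRectParam T) : ∃ G : (Fin n → ℝ) ≃ᵃ[ℝ] EuclideanSpace ℝ (Fin n), ⇑G = T := by
  obtain ⟨f, l, hl, hTfl⟩ := hT
  let scale : (Fin n → ℝ) ≃ₗ[ℝ] (Fin n → ℝ) :=
    LinearEquiv.piCongrRight fun i => LinearEquiv.smulOfNeZero ℝ ℝ (l i) (hl i).ne'
  refine ⟨(scale.trans (WithLp.linearEquiv 2 ℝ (Fin n → ℝ)).symm).toAffineEquiv.trans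
    f.toRealAffineIsometryEquiv.toAffineEquiv, funext fun x => ?_⟩
  rw [hTfl]
  rfl

theorem IsRect.exists_isRectParam {R : Set (EuclideanSpace ℝ (Fin n))} (hR : IsRect R) :
    ∃ T, IsRectParam T ∧ T '' stdBox n 0 0 = R := by
  obtain ⟨f, S, ⟨a, b, hab, rfl⟩, rfl⟩ := hR
  refine ⟨_, ⟨(IsometryEquiv.addLeft (WithLp.toLp 2 a)).trans f, fun i => b i - a i,
    fun i => sub_pos.2 (hab i), fun _ => rfl⟩, ?_⟩
  refine Eq.trans (image_image f _ _).symm (congrArg (f '' ·) ?_)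
  ext x
  constructor
  · rintro ⟨u, hu, rfl⟩ i
    obtain ⟨h₀, h₁⟩ := mem_stdBox_zero_zero.1 hu i
    have hpos := mul_pos (sub_pos.2 (hab i)) h₀
    have hlt := mul_lt_of_lt_one_right (sub_pos.2 (hab i)) h₁
    exact ⟨by simpa using hpos, by simpa [lt_sub_iff_add_lt'] using hlt⟩
  · intro hx
    refine ⟨fun i => (x i - a i) / (b i - a i), mem_stdBox_zero_zero.2 fun i => ⟨?_, ?_⟩, ?_⟩
    · exact div_pos (sub_pos.2 (hx i).1) (sub_pos.2 (hab i))
    · exact (div_lt_one (sub_pos.2 (hab i))).2 (sub_lt_sub_right (hx i).2 _)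
    · ext i
      have := (sub_pos.2 (hab i)).ne'
      simp [mul_div_cancel₀, this]

theorem ball_eq_vadd_smul_stdBox (y : Fin n → ℝ) {r : ℝ} (hr : 0 < r) :
    Metric.ball y r = (y - fun _ => r) +ᵥ (2 * r) • stdBox n 0 0 := by
  rw [stdBox_zero_zero_eq_ball, smul_ball (by positivity), Metric.vadd_ball,
    Real.norm_of_nonneg (by positivity)]
  congr 1
  · ext i
    simp [mul_comm]
  · ring

theorem isAxisCube_vadd_smul (y : EuclideanSpace ℝ (Fin n)) {t : ℝ} (ht : 0 < t) :
    IsAxisCube (y +ᵥ t • {x : EuclideanSpace ℝ (Fin n) | ∀ i, x i ∈ Ioo (0 : ℝ) 1}) := by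
  refine ⟨fun i => y i, t, ht, ?_⟩
  ext x
  rw [mem_vadd_set_iff_neg_vadd_mem, mem_smul_set_iff_inv_smul_mem₀ ht.ne']
  refine forall_congr' fun i => ?_
  simp only [vadd_eq_add, PiLp.smul_apply, PiLp.add_apply, PiLp.neg_apply, smul_eq_mul, mem_Ioo]
  rw [mul_pos_iff_of_pos_left (by positivity), inv_mul_lt_iff₀ ht, neg_add_eq_sub, sub_pos,
    mul_one, sub_lt_iff_lt_add']

theorem map_affineEquiv_apply {E F : Type*} [NormedAddCommGroup E] [NormedSpace ℝ E]
    [FiniteDimensional ℝ E] [MeasurableSpace E] [BorelSpace E] [NormedAddCommGroup F]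
    [NormedSpace ℝ F] [MeasurableSpace F] [BorelSpace F] (μ : Measure E) (T : E ≃ᵃ[ℝ] F)
    (S : Set F) : μ.map T S = μ (T ⁻¹' S) :=
  T.toContinuousAffineEquiv.toHomeomorph.measurableEmbedding.map_apply μ S

theorem map_affineEquiv_symm_apply {E F : Type*} [NormedAddCommGroup E] [NormedSpace ℝ E]
    [FiniteDimensional ℝ E] [MeasurableSpace E] [BorelSpace E] [NormedAddCommGroup F]
    [NormedSpace ℝ F] [MeasurableSpace F] [BorelSpace F] (μ : Measure E) (G : F ≃ᵃ[ℝ] E)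
    (S : Set F) : μ.map G.symm S = μ (G '' S) := by
  rw [map_affineEquiv_apply]
  exact congrArg μ (G.toEquiv.image_eq_preimage_symm S).symm

theorem ball_two_mul_eq_vadd_smul {E : Type*} [NormedAddCommGroup E] [NormedSpace ℝ E] (y : E)
    (r : ℝ) : Metric.ball y (2 * r) = (-y) +ᵥ (2 : ℝ) • Metric.ball y r := by
  rw [smul_ball two_ne_zero, Metric.vadd_ball, Real.norm_two, vadd_eq_add, two_smul,
    neg_add_cancel_left]

theorem DoublingWrt.isBallDoubling_map_symm {μ : Measure (EuclideanSpace ℝ (Fin n))} {δ : ℝ}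
    {T : EuclideanSpace ℝ (Fin n) ≃ᵃ[ℝ] EuclideanSpace ℝ (Fin n)}
    (hμ : DoublingWrt (μ.map T) {C | IsAxisCube C} δ)
    {G : (Fin n → ℝ) ≃ᵃ[ℝ] EuclideanSpace ℝ (Fin n)}
    (hTG : T '' (G '' stdBox n 0 0) = {x | ∀ i, x i ∈ Ioo (0 : ℝ) 1}) :
    IsBallDoubling (μ.map G.symm) δ.toNNReal := by
  set H := G.trans T
  have hcomp (S : Set (Fin n → ℝ)) : H '' S = T '' (G '' S) := image_comp T G S
  have hmap (S : Set (Fin n → ℝ)) : μ.map G.symm S = μ.map T (H '' S) := by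
    rw [map_affineEquiv_symm_apply, map_affineEquiv_apply, hcomp, preimage_image_eq _ T.injective]
  have himage (w : Fin n → ℝ) (t : ℝ) (S : Set (Fin n → ℝ)) :
      H '' (w +ᵥ t • S) = (H w - t • H 0) +ᵥ t • H '' S :=
    image_vadd_smul_set H.toAffineMap w t S
  intro y r hr
  have hcube : IsAxisCube (H '' Metric.ball y r) := by
    rw [ball_eq_vadd_smul_stdBox y hr, himage, hcomp, hTG]
    exact isAxisCube_vadd_smul _ (by positivity)
  have hdouble : H '' Metric.ball y (2 * r) =
      (H (-y) - (2 : ℝ) • H 0) +ᵥ (2 : ℝ) • H '' Metric.ball y r := by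
    rw [ball_two_mul_eq_vadd_smul, himage]
  rw [hmap, hmap, hdouble]
  refine hμ _ hcube _ ?_
  rw [← hdouble]
  exact image_mono (Metric.ball_subset_ball (by linarith))

theorem exists_image_dyadicZoom_preimage_eq {E : Type*} [AddCommGroup E] [Module ℝ E]
    (G : (Fin n → ℝ) →ᵃ[ℝ] E) (s : ℕ) (j : Fin n → ℤ) :
    ∃ (y : E) (t : ℝ), 0 < t ∧ ∀ S, G '' (dyadicZoom s j ⁻¹' S) = y +ᵥ t • G '' S := by
  refine ⟨G (((2 : ℝ) ^ s)⁻¹ • fun i => (j i : ℝ)) - ((2 : ℝ) ^ s)⁻¹ • G 0, ((2 : ℝ) ^ s)⁻¹,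
    by positivity, fun S => ?_⟩
  rw [dyadicZoom_preimage_eq_vadd_smul, image_vadd_smul_set]

theorem IsDyadicPacking.exists_homothetic_family {B R : Set (EuclideanSpace ℝ (Fin n))}
    {G : (Fin n → ℝ) ≃ᵃ[ℝ] EuclideanSpace ℝ (Fin n)} (hG : IsRectParam G)
    (hGR : G '' stdBox n 0 0 = R) {M : ℕ} {𝒞 : Set (Set (Fin n → ℝ))}
    (h𝒞 : IsDyadicPacking (G ⁻¹' B) M 𝒞) :
    ∃ (k : ℕ) (c : Fin k → Set (EuclideanSpace ℝ (Fin n))),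
      (∀ a : Fin k, ∃ (y : EuclideanSpace ℝ (Fin n)) (t : ℝ), 0 < t ∧ c a = y +ᵥ t • B ∧
        ∃ s : ℕ, s ≤ M ∧ DyadicDescendant R (y +ᵥ t • R) s) ∧
      Pairwise (Function.onFun Disjoint c) ∧ (⋃ a, c a) = G '' ⋃₀ 𝒞 := by
  obtain ⟨k, C, hC, rfl⟩ := h𝒞.finite.fin_param
  refine ⟨k, fun a => G '' C a, fun a => ?_, fun a b hab => ?_, ?_⟩
  · obtain ⟨s, hs, j, hj, hCa⟩ := h𝒞.exists_eq_preimage (C a) (mem_range_self a)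
    obtain ⟨y, t, ht, himage⟩ := exists_image_dyadicZoom_preimage_eq G.toAffineMap s j
    simp only [AffineEquiv.coe_toAffineMap] at himage
    refine ⟨y, t, ht, ?_, s, hs, G, hG, hGR, j, mem_dyadicPositions.1 hj, ?_⟩
    · rw [← image_preimage_eq B G.surjective, ← himage, ← hCa]
    · rw [← dyadicZoom_preimage_stdBox, himage, hGR]
  · exact (disjoint_image_iff G.injective).2 (h𝒞.pairwiseDisjoint (mem_range_self a)
      (mem_range_self b) (hC.ne hab))
  · rw [sUnion_range, image_iUnion]

end Rectangles

section Constants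

theorem ofReal_mul_one_sub_pow_div {ρ Ψ : ℝ≥0} (hΨ : Ψ < 1) (N : ℕ) :
    ENNReal.ofReal (ρ * (1 - Ψ ^ N) / (1 - Ψ)) = ↑(ρ * ∑ i ∈ Finset.range N, Ψ ^ i) := by
  have hΨ' : (Ψ : ℝ) ≠ 1 := by exact_mod_cast hΨ.ne
  have hgeom : (ρ * (1 - Ψ ^ N) / (1 - Ψ) : ℝ) = ↑(ρ * ∑ i ∈ Finset.range N, Ψ ^ i) := by
    push_cast
    rw [geom_sum_eq hΨ', ← neg_div_neg_eq (_ - _), neg_sub, neg_sub, mul_div_assoc]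
  rw [hgeom, ENNReal.ofReal_coe_nnreal]

theorem rpow_le_two_pow_toNat_ceil {x : ℝ} (hx : 0 < x) (a : ℝ) :
    x ^ a ≤ 2 ^ ⌈a * Real.logb 2 x⌉.toNat := by
  rw [← Real.rpow_natCast]
  calc x ^ a = 2 ^ (a * Real.logb 2 x) := by
        rw [mul_comm, Real.rpow_mul zero_le_two, Real.rpow_logb two_pos (by norm_num) hx]
    _ ≤ _ := Real.rpow_le_rpow_of_exponent_le one_le_two
        ((Int.le_ceil _).trans (by exact_mod_cast Int.self_le_toNat _))

theorem logb_two_pow_div_sqrt_pos {n m : ℕ} (hn : n ≠ 0)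
    (hsmall : Real.sqrt n * (2 : ℝ) ^ (-(m : ℤ)) < 1) :
    0 < Real.logb 2 ((2 : ℝ) ^ m / Real.sqrt n) := by
  rw [zpow_neg, zpow_natCast, ← div_eq_mul_inv, div_lt_one (by positivity)] at hsmall
  exact Real.logb_pos one_lt_two ((one_lt_div (by positivity)).2 hsmall)

theorem logb_two_pow_div_sqrt_le {n : ℕ} (hn : n ≠ 0) (m : ℕ) :
    Real.logb 2 ((2 : ℝ) ^ m / Real.sqrt n) ≤ m := by
  have hsqrt : 1 ≤ Real.sqrt n := Real.one_le_sqrt.2 (by exact_mod_cast Nat.one_le_iff_ne_zero.2 hn)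
  calc Real.logb 2 ((2 : ℝ) ^ m / Real.sqrt n) ≤ Real.logb 2 (2 ^ m) :=
        Real.logb_le_logb_of_le one_lt_two (by positivity) (div_le_self (by positivity) hsqrt)
    _ = m := by rw [Real.logb_pow, Real.logb_self_eq_one one_lt_two, mul_one]

theorem exists_ne_zero_two_mul_add_one_le_le_mul {m : ℕ} {D η : ℝ} (hD : 1 ≤ D) (hη₀ : 0 ≤ η)
    (hη₁ : η < 1) (hm : 9 * D ≤ η * m) : ∃ J : ℕ, J ≠ 0 ∧ 2 * J + 1 ≤ m ∧ D ≤ J * η := by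
  have hm9 : (9 : ℝ) < m := by nlinarith
  have hm9' : 9 < m := by exact_mod_cast hm9
  have hJ : (m : ℝ) ≤ 4 * ((m - 1) / 2 : ℕ) := by
    have : m ≤ 4 * ((m - 1) / 2) := by omega
    exact_mod_cast this
  exact ⟨(m - 1) / 2, by omega, by omega, by nlinarith⟩

theorem pow_three_le_zpow_four_add_ceil {n : ℕ} (hn : n ≠ 0) {δ : ℝ} (hδ : 1 ≤ δ) :
    δ ^ 3 ≤ δ ^ ((4 : ℤ) + ⌈Real.logb 2 (34 * Real.sqrt n)⌉) := by
  have hsqrt : 1 ≤ Real.sqrt n := Real.one_le_sqrt.2 (by exact_mod_cast Nat.one_le_iff_ne_zero.2 hn)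
  have hceil : 0 ≤ ⌈Real.logb 2 (34 * Real.sqrt n)⌉ :=
    Int.ceil_nonneg (Real.logb_nonneg one_lt_two (by linarith))
  rw [← zpow_natCast]
  exact zpow_le_zpow_right₀ hδ (by push_cast; linarith)

theorem lt_one_and_exists_pow_three_le_mul {n m : ℕ} (hn : n ≠ 0)
    (hsmall : Real.sqrt n * (2 : ℝ) ^ (-(m : ℤ)) < 1) {δ ξ : ℝ} (hδ : 1 ≤ δ)
    (hξ : ξ = 1 - 9 * δ ^ ((4 : ℤ) + ⌈Real.logb 2 (34 * Real.sqrt n)⌉) *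
      (Real.logb 2 ((2 : ℝ) ^ m / Real.sqrt n))⁻¹) (hξ₀ : 0 < ξ) :
    ξ < 1 ∧ ∃ J : ℕ, J ≠ 0 ∧ 2 * J + 1 ≤ m ∧ δ ^ 3 ≤ J * (1 - ξ) := by
  have hL := logb_two_pow_div_sqrt_pos hn hsmall
  have hLm := logb_two_pow_div_sqrt_le hn m
  have hD := pow_three_le_zpow_four_add_ceil hn hδ
  set L := Real.logb 2 ((2 : ℝ) ^ m / Real.sqrt n)
  set D := δ ^ ((4 : ℤ) + ⌈Real.logb 2 (34 * Real.sqrt n)⌉)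
  have hη : 1 - ξ = 9 * D * L⁻¹ := by rw [hξ]; ring
  have hη₀ : 0 < 1 - ξ := by rw [hη]; positivity
  refine ⟨sub_pos.1 hη₀, exists_ne_zero_two_mul_add_one_le_le_mul (one_le_pow₀ hδ) hη₀.le
    (by linarith) ?_⟩
  calc 9 * δ ^ 3 ≤ 9 * D := by gcongr
    _ = (1 - ξ) * L := by rw [hη, inv_mul_cancel_right₀ hL.ne']
    _ ≤ (1 - ξ) * m := by gcongr

theorem zpow_neg_mul_pow_toNat_eq_one {G₀ : Type*} [GroupWithZero G₀] {a : G₀} (ha : a ≠ 0)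
    {e : ℤ} (he : 0 ≤ e) : a ^ (-e) * a ^ e.toNat = 1 := by
  rw [← zpow_natCast, Int.toNat_of_nonneg he, zpow_neg, inv_mul_cancel₀ (zpow_ne_zero _ ha)]

end Constants

section HomotheticFamilies

variable {n : ℕ} {𝔅 : Set (Set (EuclideanSpace ℝ (Fin n)))}
  {μ : Measure (EuclideanSpace ℝ (Fin n))} {Δ δ : ℝ} {B R : Set (EuclideanSpace ℝ (Fin n))}
  {z : EuclideanSpace ℝ (Fin n)} {T : EuclideanSpace ℝ (Fin n) ≃ᵃ[ℝ] EuclideanSpace ℝ (Fin n)}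

theorem DoublingWrt.mul_measure_map_symm_le (hμ : DoublingWrt μ 𝔅 Δ) (h𝔅 : HomothecyInvariant 𝔅)
    (hB : B ∈ 𝔅) (hBc : Convex ℝ B) (hz : z ∈ B) {c : ℝ} (hc : 0 ≤ c) {k : ℕ} (hck : c ≤ 2 ^ k)
    {G : (Fin n → ℝ) ≃ᵃ[ℝ] EuclideanSpace ℝ (Fin n)}
    (hGB : G '' stdBox n 0 0 ⊆ AffineMap.homothety z c '' B) {ρ : ℝ≥0}
    (hρ : ρ * Δ.toNNReal ^ k ≤ 1) (s : ℕ) (j : Fin n → ℤ) :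
    ρ * μ.map G.symm (dyadicZoom s j ⁻¹' stdBox n 0 0) ≤
      μ.map G.symm (dyadicZoom s j ⁻¹' (G ⁻¹' B)) := by
  obtain ⟨y, t, ht, himage⟩ := exists_image_dyadicZoom_preimage_eq G.toAffineMap s j
  simp only [AffineEquiv.coe_toAffineMap] at himage
  rw [map_affineEquiv_symm_apply, map_affineEquiv_symm_apply, himage, himage,
    image_preimage_eq B G.surjective]
  have hρ' : (ρ * ENNReal.ofReal Δ ^ k : ℝ≥0∞) ≤ 1 := by
    unfold ENNReal.ofReal
    exact_mod_cast hρ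
  calc ρ * μ (y +ᵥ t • G '' stdBox n 0 0)
      ≤ ρ * (ENNReal.ofReal Δ ^ k * μ (y +ᵥ t • B)) := by
        gcongr
        exact hμ.measure_vadd_smul_le h𝔅 hB hBc hz hc hck hGB y ht
    _ ≤ μ (y +ᵥ t • B) := by
        rw [← mul_assoc]
        exact mul_le_of_le_one_left' hρ'

theorem DoublingWrt.exists_homothetic_family_le_measure [IsLocallyFiniteMeasure μ]
    (hμ : DoublingWrt μ 𝔅 Δ) (h𝔅 : HomothecyInvariant 𝔅) (hB : B ∈ 𝔅) (hBo : IsOpen B)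
    (hBc : Convex ℝ B) (hz : z ∈ B) (hR : IsRect R) (hBR : B ⊆ R) {c : ℝ} (hc : 0 ≤ c) {k : ℕ}
    (hck : c ≤ 2 ^ k) (hRB : R ⊆ AffineMap.homothety z c '' B)
    (hT : T '' R = {x | ∀ i, x i ∈ Ioo (0 : ℝ) 1})
    (hμT : DoublingWrt (μ.map T) {C | IsAxisCube C} δ) {m J : ℕ} {ρ ξ : ℝ} (hΔ : 0 ≤ Δ)
    (hδ : 0 ≤ δ) (hρ₀ : 0 < ρ) (hρ : ρ * Δ ^ k ≤ 1) (hρξ : ρ ≤ ξ) (hξ : ξ ≤ 1) (hJ : J ≠ 0)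
    (hJm : 2 * J + 1 ≤ m) (hJξ : δ ^ 3 ≤ J * (1 - ξ)) (N : ℕ) :
    ∃ (k : ℕ) (c : Fin k → Set (EuclideanSpace ℝ (Fin n))),
      (∀ a : Fin k, ∃ (y : EuclideanSpace ℝ (Fin n)) (t : ℝ), 0 < t ∧ c a = y +ᵥ t • B ∧
        ∃ s : ℕ, s ≤ N * m ∧ DyadicDescendant R (y +ᵥ t • R) s) ∧
      Pairwise (Function.onFun Disjoint c) ∧ (⋃ a, c a) ⊆ R ∧
      ENNReal.ofReal (ρ * (1 - (ξ - ρ) ^ (N + 1)) / (1 - (ξ - ρ))) * μ R ≤ μ (⋃ a, c a) := by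
  obtain ⟨Ψ, hΨ⟩ : ∃ Ψ : ℝ≥0, (Ψ : ℝ) = ξ - ρ := CanLift.prf _ (sub_nonneg.2 hρξ)
  obtain ⟨η, hη⟩ : ∃ η : ℝ≥0, (η : ℝ) = 1 - ξ := CanLift.prf _ (sub_nonneg.2 hξ)
  lift ρ to ℝ≥0 using hρ₀.le
  lift δ to ℝ≥0 using hδ
  lift Δ to ℝ≥0 using hΔ
  rw [← hη] at hJξ
  have hsum : ρ + Ψ + η = 1 := NNReal.coe_injective (by push_cast; linarith)
  have hΨ₁ : Ψ < 1 := NNReal.coe_lt_coe.1 (by push_cast; linarith)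
  obtain ⟨_, hG, rfl⟩ := hR.exists_isRectParam
  obtain ⟨G, rfl⟩ := hG.exists_affineEquiv
  have hGc : Continuous G := G.toContinuousAffineEquiv.continuous
  have hKQ : G ⁻¹' B ⊆ stdBox n 0 0 :=
    (preimage_mono hBR).trans (preimage_image_eq _ G.injective).subset
  have : IsFiniteMeasureOnCompacts (μ.map G.symm) :=
    Measure.IsFiniteMeasureOnCompacts.map μ G.symm.toContinuousAffineEquiv.toHomeomorph
  obtain ⟨𝒞, h𝒞, hle⟩ := exists_isDyadicPacking_le_measure (hBo.preimage hGc)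
    (hBc.affine_preimage G.toAffineMap) (Nonempty.preimage ⟨z, hz⟩ G.surjective) hKQ hJ hJm
    (by rw [Real.toNNReal_coe]; exact_mod_cast hJξ) hsum N (μ.map G.symm)
    (hμT.isBallDoubling_map_symm hT) (hμ.mul_measure_map_symm_le h𝔅 hB hBc hz hc hck hRB
      (by rw [Real.toNNReal_coe]; exact_mod_cast hρ))
  obtain ⟨k, c, hcopies, hdisj, hunion⟩ := h𝒞.exists_homothetic_family hG rfl
  refine ⟨k, c, hcopies, hdisj, ?_, ?_⟩
  · rw [hunion]
    exact image_mono (h𝒞.sUnion_subset hKQ)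
  · rwa [hunion, ← map_affineEquiv_symm_apply, ← map_affineEquiv_symm_apply, ← hΨ,
      ofReal_mul_one_sub_pow_div hΨ₁]

end HomotheticFamilies

/-- Lemma `l.homcopies` of the paper. Let `𝔅` be a homothecy
invariant basis of nonempty bounded open convex sets, `μ` nonzero locally finite and
doubling w.r.t. `𝔅` with constant `Δ`, and `ρ = Δ^{-⌈(3/2)·log₂ n⌉}`. Let `B ∈ 𝔅` with
associated rectangle `R ⊇ B` contained in the image of `B` under a homothety of ratio
`n^{3/2}` centered at a point of `B`. Let the affine equivalence `T` map `R` onto the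
open unit cube, let `δ > 1` be a doubling constant of the pushforward `μ ∘ T⁻¹` with
respect to axis-parallel cubes, and let `m ≥ 1` be so large that `√n·2^{-m} < 1` and
`ξ_m > ρ`, where `ξ_m = 1 - 9·δ^{4+⌈log₂(34√n)⌉}·(log₂(2^m/√n))⁻¹`; set `Ψ = ξ_m - ρ`.
Then for every `N ≥ 1` there is a finite pairwise disjoint family of homothetic copies
of `B` inside `R`, whose associated rectangles are dyadic descendants of `R` of
generation at most `N·m`, whose union `B_N` satisfies
`μ(B_N) ≥ ρ·(1-Ψ^{N+1})/(1-Ψ)·μ(R)`. -/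
theorem statement18 (n : ℕ) (𝔅 : Set (Set (EuclideanSpace ℝ (Fin n))))
    (hB : ∀ B ∈ 𝔅, IsConvexBasisSet B) (hhom : HomothecyInvariant 𝔅)
    (μ : Measure (EuclideanSpace ℝ (Fin n)))
    (hloc : IsLocallyFiniteMeasure μ) (hμ : μ ≠ 0)
    (Δ : ℝ) (hΔ : 1 < Δ) (hdbl : DoublingWrt μ 𝔅 Δ)
    (B R : Set (EuclideanSpace ℝ (Fin n))) (hBmem : B ∈ 𝔅)
    (hRrect : IsRect R) (hBR : B ⊆ R)
    (hRB : ∃ z ∈ B, R ⊆ (fun x => z + ((n : ℝ) ^ (3 / 2 : ℝ)) • (x - z)) '' B)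
    (T : EuclideanSpace ℝ (Fin n) ≃ᵃ[ℝ] EuclideanSpace ℝ (Fin n))
    (hT : T '' R = {x | ∀ i, x i ∈ Set.Ioo (0 : ℝ) 1})
    (δ : ℝ) (hδ : 1 < δ)
    (hdblcube : DoublingWrt (μ.map T) {C | IsAxisCube C} δ)
    (ρ ξ Ψ : ℝ)
    (hρ : ρ = Δ ^ (-⌈(3 / 2 : ℝ) * Real.logb 2 n⌉))
    (m : ℕ) (hm : 0 < m) (hsmall : Real.sqrt n * (2 : ℝ) ^ (-(m : ℤ)) < 1)
    (hξ : ξ = 1 - 9 * δ ^ ((4 : ℤ) + ⌈Real.logb 2 (34 * Real.sqrt n)⌉) *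
      (Real.logb 2 ((2 : ℝ) ^ m / Real.sqrt n))⁻¹)
    (hξρ : ρ < ξ) (hΨ : Ψ = ξ - ρ) :
    ∀ N : ℕ, 0 < N →
      ∃ (k : ℕ) (c : Fin k → Set (EuclideanSpace ℝ (Fin n))),
        (∀ a : Fin k, ∃ (y : EuclideanSpace ℝ (Fin n)) (t : ℝ), 0 < t ∧
          c a = y +ᵥ t • B ∧
          ∃ s : ℕ, s ≤ N * m ∧ DyadicDescendant R (y +ᵥ t • R) s) ∧
        Pairwise (Function.onFun Disjoint c) ∧
        (⋃ a, c a) ⊆ R ∧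
        ENNReal.ofReal (ρ * (1 - Ψ ^ (N + 1)) / (1 - Ψ)) * μ R ≤ μ (⋃ a, c a) := by
  have hn : n ≠ 0 := by
    rintro rfl
    simp only [CharP.cast_eq_zero, Real.logb_zero, mul_zero, Int.ceil_zero, neg_zero, zpow_zero,
      Real.sqrt_zero, div_zero, inv_zero, sub_zero] at hρ hξ
    exact hξρ.ne (hρ.trans hξ.symm)
  have hρ₀ : 0 < ρ := hρ ▸ by positivity
  have hceil : 0 ≤ ⌈(3 / 2 : ℝ) * Real.logb 2 n⌉ := Int.ceil_nonneg
    (mul_nonneg (by norm_num) (Real.logb_nonneg one_lt_two (by exact_mod_cast hn.bot_lt)))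
  have hΔρ : ρ * Δ ^ ⌈(3 / 2 : ℝ) * Real.logb 2 n⌉.toNat = 1 :=
    hρ ▸ zpow_neg_mul_pow_toNat_eq_one (zero_lt_one.trans hΔ).ne' hceil
  obtain ⟨hξ₁, J, hJ, hJm, hJξ⟩ :=
    lt_one_and_exists_pow_three_le_mul hn hsmall hδ.le hξ (hρ₀.trans hξρ)
  obtain ⟨z, hz, hRz⟩ := hRB
  have hhomothety (c : ℝ) : (fun x => z + c • (x - z)) = AffineMap.homothety z c :=
    funext fun x => add_comm _ _
  rw [hhomothety] at hRz
  obtain ⟨-, -, hBo, hBc⟩ := hB B hBmem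
  subst hΨ
  exact fun N _ => hdbl.exists_homothetic_family_le_measure hhom hBmem hBo hBc hz hRrect hBR
    (by positivity) (rpow_le_two_pow_toNat_ceil (by positivity) _) hRz hT hdblcube
    (by positivity) (by positivity) hρ₀ hΔρ.le hξρ.le hξ₁.le hJ hJm hJξ N
end
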